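/- Let s₀ > d be an integer, m₁,m₂ ∈ ℝ with m₁+m₂−2 ≤ 0, a ∈ 𝒩^{m₁}_{s₀+4}, b ∈ 𝒩^{m₂}_{s₀+4}, and for R > 0 set a_R(x,ξ) := 𝒳_R(ξ)a(x,ξ), b_R(x,ξ) := 𝒳_R(ξ)b(x,ξ). Then T_{a_R} ∘ T_{b_R} = T_{a_R b_R} + (1/(2i)) T_{{a_R,b_R}} − (1/8) T_{σ(a_R,b_R)} + R(a_R,b_R), where for any s ∈ ℝ and h ∈ H^s(𝕋^d;ℂ): ‖R(a_R,b_R)h‖_{H^{s−m₁−m₂+2}} ≤ C R^{-1} |a|_{𝒩^{m₁}_{s₀+4}} |b|_{𝒩^{m₂}_{s₀+4}} ‖h‖_{H^s}. -/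

import Mathlib

open MeasureTheory Complex Real Filter

noncomputable section

namespace QLNLS

/-- Points of `ℝ^d` (resp. the torus `𝕋^d = (ℝ/2πℤ)^d`, via `2π`-periodic functions). -/
abbrev Vec (d : ℕ) := Fin d → ℝ
/-- Frequency lattice `ℤ^d`. -/
abbrev Zd (d : ℕ) := Fin d → ℤ
/-- Functions on the torus. -/
abbrev Fn (d : ℕ) := Vec d → ℂ
/-- Sequences of Fourier coefficients. -/
abbrev Seq (d : ℕ) := Zd d → ℂ
/-- Symbols `a(x, ξ)`. -/
abbrev Sym (d : ℕ) := Vec d → Vec d → ℂ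

variable {d : ℕ}

/-- Euclidean norm `|ξ|`. -/
def rnorm (ξ : Vec d) : ℝ := Real.sqrt (∑ i, (ξ i) ^ 2)

/-- Euclidean norm `|n|` of a lattice point. -/
def znorm (n : Zd d) : ℝ := Real.sqrt (∑ i, ((n i : ℝ)) ^ 2)

/-- Japanese bracket `⟨n⟩ = (1+|n|²)^{1/2}`. -/
def jb (n : Zd d) : ℝ := Real.sqrt (1 + ∑ i, ((n i : ℝ)) ^ 2)

/-- Japanese bracket `⟨ξ⟩` for real frequencies. -/
def jbR (ξ : Vec d) : ℝ := Real.sqrt (1 + ∑ i, (ξ i) ^ 2)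

/-- `2π`-periodicity in every coordinate. -/
def Periodic2pi (u : Fn d) : Prop :=
  ∀ (x : Vec d) (n : Zd d), u (fun i => x i + 2 * π * (n i : ℝ)) = u x

/-- A fundamental domain of the torus. -/
def box (d : ℕ) : Set (Vec d) := Set.univ.pi fun _ : Fin d => Set.Ioc (0 : ℝ) (2 * π)

/-- Fourier coefficient `û(n) = (2π)^{-d/2} ∫ u(x) e^{-i n·x} dx`. -/
def fCoeff (u : Fn d) (n : Zd d) : ℂ :=
  (((2 * π : ℝ) ^ (-(d : ℝ) / 2) : ℝ) : ℂ) *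
    ∫ x in box d, u x * Complex.exp (-Complex.I * ((∑ i, (n i : ℝ) * x i : ℝ) : ℂ))

/-- Squared Sobolev norm of a coefficient sequence. -/
def hsNormSq (s : ℝ) (c : Seq d) : ℝ := ∑' n : Zd d, jb n ^ (2 * s) * ‖c n‖ ^ 2

/-- Sobolev norm of a coefficient sequence. -/
def hsNorm (s : ℝ) (c : Seq d) : ℝ := Real.sqrt (hsNormSq s c)

/-- Membership of a coefficient sequence in `H^s`. -/
def InHsSeq (s : ℝ) (c : Seq d) : Prop :=
  Summable fun n : Zd d => jb n ^ (2 * s) * ‖c n‖ ^ 2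

/-- `H^s` norm of a function on the torus. -/
def sobNorm (s : ℝ) (u : Fn d) : ℝ := hsNorm s (fCoeff u)

/-- `u ∈ H^s(𝕋^d;ℂ)`: `u` is `2π`-periodic, its Fourier coefficients are `H^s`-summable,
and `u` is represented by its Fourier series. -/
def InHs (s : ℝ) (u : Fn d) : Prop :=
  Periodic2pi u ∧ InHsSeq s (fCoeff u) ∧
    ∀ x : Vec d, HasSum
      (fun n : Zd d => (((2 * π : ℝ) ^ (-(d : ℝ) / 2) : ℝ) : ℂ) * fCoeff u n *
        Complex.exp (Complex.I * ((∑ i, (n i : ℝ) * x i : ℝ) : ℂ))) (u x)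

/-- Partial derivative `∂_{x_i}` of a function. -/
def pdF (i : Fin d) (u : Fn d) : Fn d := fun x => fderiv ℝ u x (Pi.single i 1)

/-- Partial derivative `∂_{x_i}` of a symbol. -/
def pdx (i : Fin d) (a : Sym d) : Sym d := fun x ξ => fderiv ℝ (fun y => a y ξ) x (Pi.single i 1)

/-- Partial derivative `∂_{ξ_i}` of a symbol. -/
def pdxi (i : Fin d) (a : Sym d) : Sym d := fun x ξ => fderiv ℝ (fun η => a x η) ξ (Pi.single i 1)

/-- Iterated mixed partial derivative of a symbol along a list of directions
(`Sum.inl j` = `∂_{x_j}`, `Sum.inr j` = `∂_{ξ_j}`). -/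
def mderiv (L : List (Fin d ⊕ Fin d)) (a : Sym d) : Sym d :=
  L.foldr (fun i b => match i with | Sum.inl j => pdx j b | Sum.inr j => pdxi j b) a

/-- Number of `ξ`-derivatives in a list of directions. -/
def nXi (L : List (Fin d ⊕ Fin d)) : ℕ := (L.filter fun i => i.isRight).length

/-- The set of values whose supremum is the symbol seminorm `|a|_{𝒩^m_s}`. -/
def symVals (m : ℝ) (s : ℕ) (a : Sym d) : Set ℝ :=
  { r | ∃ (L : List (Fin d ⊕ Fin d)) (x ξ : Vec d), L.length ≤ s ∧
        r = jbR ξ ^ (-m + (nXi L : ℝ)) * ‖mderiv L a x ξ‖ }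

/-- Symbol seminorm `|a|_{𝒩^m_s}`. -/
def symNorm (m : ℝ) (s : ℕ) (a : Sym d) : ℝ := sSup (symVals m s a)

/-- Membership in the symbol class `𝒩^m_s`. -/
def InSymClass (m : ℝ) (s : ℕ) (a : Sym d) : Prop :=
  ContDiff ℝ (s : ℕ∞) (Function.uncurry a) ∧ (∀ ξ, Periodic2pi fun x => a x ξ) ∧
    BddAbove (symVals m s a)

/-- Poisson bracket `{a,b}`. -/
def poisson (a b : Sym d) : Sym d := fun x ξ =>
  ∑ j, (pdxi j a x ξ * pdx j b x ξ - pdx j a x ξ * pdxi j b x ξ)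

/-- The second-order bracket `σ(a,b)`. -/
def sigmaB (a b : Sym d) : Sym d := fun x ξ =>
  ∑ j, ∑ k,
    (pdxi j (pdxi k a) x ξ * pdx j (pdx k b) x ξ
      - 2 * pdx j (pdxi k a) x ξ * pdxi j (pdx k b) x ξ
      + pdx j (pdx k a) x ξ * pdxi j (pdxi k b) x ξ)

/-- An admissible cut-off function `χ`. -/
structure IsCutoff (χ : ℝ → ℝ) : Prop where
  smooth : ContDiff ℝ (⊤ : ℕ∞) χ
  mem : ∀ t : ℝ, χ t ∈ Set.Icc (0 : ℝ) 1
  eq_one : ∀ t : ℝ, |t| ≤ 5 / 4 → χ t = 1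
  eq_zero : ∀ t : ℝ, 8 / 5 ≤ |t| → χ t = 0

/-- `x`-Fourier coefficient `â(η, ξ)` of a symbol. -/
def symCoeff (a : Sym d) (η : Zd d) (ξ : Vec d) : ℂ := fCoeff (fun x => a x ξ) η

/-- Midpoint `(j+k)/2` of two lattice points. -/
def mid (j k : Zd d) : Vec d := fun i => ((j i + k i : ℤ) : ℝ) / 2

/-- The paradifferential cut-off factor `χ_ε(|j-k|/⟨j+k⟩) = χ(|j-k|/(ε⟨j+k⟩))`. -/
def cutFactor (χ : ℝ → ℝ) (ε : ℝ) (j k : Zd d) : ℝ :=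
  χ (znorm (j - k) / (ε * jb (j + k)))

/-- The Weyl paradifferential operator `T_a`, acting on Fourier coefficient sequences:
`(T_a h)^(j) = (2π)^{-d/2} Σ_k χ_ε(|j-k|/⟨j+k⟩) â(j-k,(j+k)/2) ĥ(k)`. -/
def paraC (χ : ℝ → ℝ) (ε : ℝ) (a : Sym d) (c : Seq d) : Seq d := fun j =>
  (((2 * π : ℝ) ^ (-(d : ℝ) / 2) : ℝ) : ℂ) *
    ∑' k : Zd d, ((cutFactor χ ε j k : ℝ) : ℂ) * symCoeff a (j - k) (mid j k) * c k

/-- The operator `R_a` built from the difference of two cut-offs. -/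
def remC (χ : ℝ → ℝ) (ε₁ ε₂ : ℝ) (a : Sym d) (c : Seq d) : Seq d := fun j =>
  (((2 * π : ℝ) ^ (-(d : ℝ) / 2) : ℝ) : ℂ) *
    ∑' k : Zd d, ((cutFactor χ ε₁ j k - cutFactor χ ε₂ j k : ℝ) : ℂ) *
      symCoeff a (j - k) (mid j k) * c k

/-- Wirtinger derivative `∂_{y_j} = (∂_{Re y_j} - i ∂_{Im y_j})/2`. -/
def wdP {n : ℕ} (j : Fin n) (G : (Fin n → ℂ) → ℂ) : (Fin n → ℂ) → ℂ := fun y =>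
  (fderiv ℝ G y (Pi.single j 1) - Complex.I * fderiv ℝ G y (Pi.single j Complex.I)) / 2

/-- Wirtinger derivative `∂_{ȳ_j} = (∂_{Re y_j} + i ∂_{Im y_j})/2`. -/
def wdM {n : ℕ} (j : Fin n) (G : (Fin n → ℂ) → ℂ) : (Fin n → ℂ) → ℂ := fun y =>
  (fderiv ℝ G y (Pi.single j 1) + Complex.I * fderiv ℝ G y (Pi.single j Complex.I)) / 2

/-- The 1-jet `(u, ∇u)` of a function, as a point of `ℂ^{d+1}`. -/
def jet (u : Fn d) (x : Vec d) : Fin (d + 1) → ℂ :=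
  Fin.cons (u x) fun j => pdF j u x

/-- The Hamiltonian nonlinearity
`P(u) = (∂_{ū}F)(u,∇u) - Σ_j ∂_{x_j}((∂_{ū_{x_j}}F)(u,∇u))`. -/
def Pop (F : (Fin (d + 1) → ℂ) → ℂ) (u : Fn d) : Fn d := fun x =>
  wdM 0 F (jet u x) - ∑ j, pdF j (fun y => wdM (Fin.succ j) F (jet u y)) x

/-- `F ∈ C^∞(ℂ^{d+1};ℝ)` in the real sense, with a zero of order at least 3 at the origin. -/
def GoodF (d : ℕ) (F : (Fin (d + 1) → ℂ) → ℂ) : Prop :=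
  ContDiff ℝ (⊤ : ℕ∞) F ∧ (∀ y, (F y).im = 0) ∧ ∀ k : ℕ, k ≤ 2 → iteratedFDeriv ℝ k F 0 = 0

/-- Global ellipticity (Hypothesis 1.1). -/
def Elliptic (d : ℕ) (F : (Fin (d + 1) → ℂ) → ℂ) : Prop :=
  ∃ c₁ > (0 : ℝ), ∃ c₂ > (0 : ℝ), ∀ (ξ : Vec d) (y : Fin (d + 1) → ℂ),
    (c₁ * ∑ i, (ξ i) ^ 2 ≤
      (∑ j, ∑ k, ((ξ j * ξ k : ℝ) : ℂ) *
        ((if j = k then 1 else 0) + wdP (Fin.succ j) (wdM (Fin.succ k) F) y)).re) ∧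
    (ξ ≠ 0 → c₂ ≤
      (1 + (∑ j, ∑ k, ((ξ j * ξ k : ℝ) : ℂ) * wdP (Fin.succ j) (wdM (Fin.succ k) F) y).re
            / ∑ i, (ξ i) ^ 2) ^ 2
        - ‖∑ j, ∑ k, ((ξ j * ξ k : ℝ) : ℂ) * wdM (Fin.succ j) (wdM (Fin.succ k) F) y‖ ^ 2
            / (∑ i, (ξ i) ^ 2) ^ 2)

/-- The symbol `a₂(x,ξ) = Σ_{j,k} (∂_{ū_{x_k}}∂_{u_{x_j}}F)(u,∇u) ξ_j ξ_k`. -/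
def a2sym (F : (Fin (d + 1) → ℂ) → ℂ) (u : Fn d) : Sym d := fun x ξ =>
  ∑ j, ∑ k, ((ξ j * ξ k : ℝ) : ℂ) * wdP (Fin.succ j) (wdM (Fin.succ k) F) (jet u x)

/-- The symbol `b₂(x,ξ) = Σ_{j,k} (∂_{ū_{x_k}}∂_{ū_{x_j}}F)(u,∇u) ξ_j ξ_k`. -/
def b2sym (F : (Fin (d + 1) → ℂ) → ℂ) (u : Fn d) : Sym d := fun x ξ =>
  ∑ j, ∑ k, ((ξ j * ξ k : ℝ) : ℂ) * wdM (Fin.succ j) (wdM (Fin.succ k) F) (jet u x)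

/-- The symbol `a₁(x,ξ) = (i/2) Σ_j ((∂_{ū}∂_{u_{x_j}}F) - (∂_u∂_{ū_{x_j}}F))(u,∇u) ξ_j`. -/
def a1sym (F : (Fin (d + 1) → ℂ) → ℂ) (u : Fn d) : Sym d := fun x ξ =>
  Complex.I / 2 * ∑ j, ((ξ j : ℝ) : ℂ) *
    (wdM 0 (wdP (Fin.succ j) F) (jet u x) - wdP 0 (wdM (Fin.succ j) F) (jet u x))

/-- Conjugation of a coefficient sequence: the sequence of `conj u`. -/
def starSeq (c : Seq d) : Seq d := fun n => (starRingEnd ℂ) (c (-n))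

/-- Pointwise conjugate of a function. -/
def starF (u : Fn d) : Fn d := fun x => (starRingEnd ℂ) (u x)

/-- Pointwise conjugate of a symbol. -/
def starSym (a : Sym d) : Sym d := fun x ξ => (starRingEnd ℂ) (a x ξ)

/-- The symbol `(x,ξ) ↦ conj (a(x,-ξ))`. -/
def flipSym (a : Sym d) : Sym d := fun x ξ => (starRingEnd ℂ) (a x (-ξ))

/-- The matrix `E = diag(1,-1)` as a sign vector. -/
def Em : Fin 2 → ℂ := ![1, -1]

/-- `Op^BW` of a 2×2 matrix of symbols, acting on vectors of coefficient sequences. -/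
def opBWmat (χ : ℝ → ℝ) (ε : ℝ) (A : Fin 2 → Fin 2 → Sym d) (C : Fin 2 → Seq d) :
    Fin 2 → Seq d := fun σ j => ∑ τ, paraC χ ε (A σ τ) (C τ) j

/-- The symbol `|ξ|²`. -/
def sq2sym (d : ℕ) : Sym d := fun _ ξ => (((rnorm ξ) ^ 2 : ℝ) : ℂ)

/-- The matrix of symbols `A₂(x,ξ)`. -/
def A2mat (F : (Fin (d + 1) → ℂ) → ℂ) (u : Fn d) : Fin 2 → Fin 2 → Sym d :=
  ![![a2sym F u, b2sym F u], ![flipSym (b2sym F u), a2sym F u]]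

/-- The matrix of symbols `A₁(x,ξ)`. -/
def A1mat (F : (Fin (d + 1) → ℂ) → ℂ) (u : Fn d) : Fin 2 → Fin 2 → Sym d :=
  ![![a1sym F u, 0], ![0, flipSym (a1sym F u)]]

/-- The full matrix of symbols `|ξ|²𝟙 + A₂(x,ξ) + A₁(x,ξ)`. -/
def sysSym (F : (Fin (d + 1) → ℂ) → ℂ) (u : Fn d) : Fin 2 → Fin 2 → Sym d := fun σ τ =>
  fun x ξ => (if σ = τ then sq2sym d x ξ else 0) + A2mat F u σ τ x ξ + A1mat F u σ τ x ξ

/-- `H^s` norm of a vector of coefficient sequences. -/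
def hsNormVec (s : ℝ) (C : Fin 2 → Seq d) : ℝ := hsNorm s (C 0) + hsNorm s (C 1)

/-- Membership of a vector of coefficient sequences in `H^s`. -/
def InHsVec (s : ℝ) (C : Fin 2 → Seq d) : Prop := InHsSeq s (C 0) ∧ InHsSeq s (C 1)

/-- The `L²` pairing `(U,V) = ∫ (u v̄ + ū v)`, at the level of Fourier coefficients. -/
def pairL2 (C E : Fin 2 → Seq d) : ℂ :=
  ∑' n : Zd d, (C 0 n * (starRingEnd ℂ) (E 0 n) + C 1 n * (starRingEnd ℂ) (E 1 n))

/-- The scalar `L²` pairing, at the level of Fourier coefficients. -/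
def pairS (c e : Seq d) : ℂ := ∑' n : Zd d, c n * (starRingEnd ℂ) (e n)

/-- A matrix of operators is real-to-real: it preserves the subspace `𝒰 = {(u, ū)}`. -/
def PreservesReality (M : (Fin 2 → Seq d) → (Fin 2 → Seq d)) : Prop :=
  ∀ c : Seq d, M ![c, starSeq c] 1 = starSeq (M ![c, starSeq c] 0)

/-- The coefficient vector of `(v(t), conj v(t))`. -/
def Vvec (v : ℝ → Fn d) (t : ℝ) : Fin 2 → Seq d :=
  ![fCoeff (v t), starSeq (fCoeff (v t))]

/-- `V = (v, v̄)` solves `V̇ = iE Op^BW(|ξ|²𝟙 + A₂ + A₁)V` on `[0,T)`. -/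
def SolvesLin (χ : ℝ → ℝ) (ε : ℝ) (F : (Fin (d + 1) → ℂ) → ℂ) (T : ℝ)
    (u v : ℝ → Fn d) : Prop :=
  ∀ᵐ t ∂(volume.restrict (Set.Ico (0 : ℝ) T)), ∀ (σ : Fin 2) (n : Zd d),
    HasDerivAt (fun τ => Vvec v τ σ n)
      (Complex.I * Em σ * opBWmat χ ε (sysSym F (u t)) (Vvec v t) σ n) t

/-- The regularity hypothesis (4.1):
`u ∈ L^∞([0,T);H^s) ∩ Lip([0,T);H^{s-2})`, with
`sup_t ‖u(t)‖_{H^{2s₀+7}} ≤ r` and `‖∂_t u‖_{H^{2s₀+5}} ≤ r` (as a Lipschitz bound). -/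
def RegHyp (s₀ : ℕ) (s T r : ℝ) (u : ℝ → Fn d) : Prop :=
  (∀ t ∈ Set.Ico (0 : ℝ) T, InHs s (u t)) ∧
  (∃ M : ℝ, ∀ t ∈ Set.Ico (0 : ℝ) T, sobNorm s (u t) ≤ M) ∧
  (∃ L : ℝ, ∀ t₁ ∈ Set.Ico (0 : ℝ) T, ∀ t₂ ∈ Set.Ico (0 : ℝ) T,
    sobNorm (s - 2) (u t₁ - u t₂) ≤ L * |t₁ - t₂|) ∧
  (∀ t ∈ Set.Ico (0 : ℝ) T, sobNorm (2 * (s₀ : ℝ) + 7) (u t) ≤ r) ∧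
  (∀ t₁ ∈ Set.Ico (0 : ℝ) T, ∀ t₂ ∈ Set.Ico (0 : ℝ) T,
    sobNorm (2 * (s₀ : ℝ) + 5) (u t₁ - u t₂) ≤ r * |t₁ - t₂|)

/-- `v ∈ L^∞([0,T);H^s) ∩ Lip([0,T);H^{s-2})`. -/
def RegSol (s T : ℝ) (v : ℝ → Fn d) : Prop :=
  (∀ t ∈ Set.Ico (0 : ℝ) T, InHs s (v t)) ∧
  (∃ M : ℝ, ∀ t ∈ Set.Ico (0 : ℝ) T, sobNorm s (v t) ≤ M) ∧
  (∃ L : ℝ, ∀ t₁ ∈ Set.Ico (0 : ℝ) T, ∀ t₂ ∈ Set.Ico (0 : ℝ) T,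
    sobNorm (s - 2) (v t₁ - v t₂) ≤ L * |t₁ - t₂|)

/-- The high-frequency cut-off `𝒳_R(ξ) = 1 - χ(|ξ|/R)`. -/
def cutXR (χ : ℝ → ℝ) (R : ℝ) (ξ : Vec d) : ℝ := 1 - χ (rnorm ξ / R)

/-- `ã_{2,R}(x,ξ) = |ξ|^{-2} a₂(x,ξ) 𝒳_R(ξ)`. -/
def a2til (F : (Fin (d + 1) → ℂ) → ℂ) (u : Fn d) (χ : ℝ → ℝ) (R : ℝ) : Sym d := fun x ξ =>
  ((((rnorm ξ) ^ 2)⁻¹ * cutXR χ R ξ : ℝ) : ℂ) * a2sym F u x ξ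

/-- `b̃_{2,R}(x,ξ) = |ξ|^{-2} b₂(x,ξ) 𝒳_R(ξ)`. -/
def b2til (F : (Fin (d + 1) → ℂ) → ℂ) (u : Fn d) (χ : ℝ → ℝ) (R : ℝ) : Sym d := fun x ξ =>
  ((((rnorm ξ) ^ 2)⁻¹ * cutXR χ R ξ : ℝ) : ℂ) * b2sym F u x ξ

/-- `λ₂ = ((1+ã_{2,R})² - |b̃_{2,R}|²)^{1/2}`. -/
def lam2 (F : (Fin (d + 1) → ℂ) → ℂ) (u : Fn d) (χ : ℝ → ℝ) (R : ℝ) :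
    Vec d → Vec d → ℝ := fun x ξ =>
  Real.sqrt ((1 + (a2til F u χ R x ξ).re) ^ 2 - ‖b2til F u χ R x ξ‖ ^ 2)

/-- The normalizing denominator `(2λ₂(1+ã_{2,R}+λ₂))^{1/2}`. -/
def sden (F : (Fin (d + 1) → ℂ) → ℂ) (u : Fn d) (χ : ℝ → ℝ) (R : ℝ) :
    Vec d → Vec d → ℝ := fun x ξ =>
  Real.sqrt (2 * lam2 F u χ R x ξ * (1 + (a2til F u χ R x ξ).re + lam2 F u χ R x ξ))

/-- The symbol `s₁`. -/
def s1sym (F : (Fin (d + 1) → ℂ) → ℂ) (u : Fn d) (χ : ℝ → ℝ) (R : ℝ) : Sym d := fun x ξ =>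
  (((1 + (a2til F u χ R x ξ).re + lam2 F u χ R x ξ) / sden F u χ R x ξ : ℝ) : ℂ)

/-- The symbol `s₂`. -/
def s2sym (F : (Fin (d + 1) → ℂ) → ℂ) (u : Fn d) (χ : ℝ → ℝ) (R : ℝ) : Sym d := fun x ξ =>
  -b2til F u χ R x ξ / ((sden F u χ R x ξ : ℝ) : ℂ)

/-- `ã⁺_{2,R} = λ₂ - 1`. -/
def a2plus (F : (Fin (d + 1) → ℂ) → ℂ) (u : Fn d) (χ : ℝ → ℝ) (R : ℝ) : Sym d := fun x ξ =>
  ((lam2 F u χ R x ξ - 1 : ℝ) : ℂ)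

/-- The diagonalized second-order symbol `a₂^{(1)}(x,ξ) = |ξ|² ã⁺_{2,R}(x,ξ)`. -/
def a2one (F : (Fin (d + 1) → ℂ) → ℂ) (u : Fn d) (χ : ℝ → ℝ) (R : ℝ) : Sym d := fun x ξ =>
  (((rnorm ξ) ^ 2 * (lam2 F u χ R x ξ - 1) : ℝ) : ℂ)

/-- The real scalar symbol `ℒ(x,ξ) = |ξ|² + a₂^{(1)}(x,ξ)`. -/
def Lscal (F : (Fin (d + 1) → ℂ) → ℂ) (u : Fn d) (χ : ℝ → ℝ) (R : ℝ) :
    Vec d → Vec d → ℝ := fun x ξ =>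
  (rnorm ξ) ^ 2 + (rnorm ξ) ^ 2 * (lam2 F u χ R x ξ - 1)

/-- The matrix `S(x,ξ)`. -/
def Smat (F : (Fin (d + 1) → ℂ) → ℂ) (u : Fn d) (χ : ℝ → ℝ) (R : ℝ) (x ξ : Vec d) :
    Matrix (Fin 2) (Fin 2) ℂ :=
  !![s1sym F u χ R x ξ, s2sym F u χ R x ξ;
     (starRingEnd ℂ) (s2sym F u χ R x ξ), s1sym F u χ R x ξ]

/-- The matrix `S^{-1}(x,ξ)`. -/
def SmatInv (F : (Fin (d + 1) → ℂ) → ℂ) (u : Fn d) (χ : ℝ → ℝ) (R : ℝ) (x ξ : Vec d) :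
    Matrix (Fin 2) (Fin 2) ℂ :=
  !![s1sym F u χ R x ξ, -s2sym F u χ R x ξ;
     -(starRingEnd ℂ) (s2sym F u χ R x ξ), s1sym F u χ R x ξ]

/-- The matrix `Ã_{2,R}(x,ξ)`. -/
def A2tilMat (F : (Fin (d + 1) → ℂ) → ℂ) (u : Fn d) (χ : ℝ → ℝ) (R : ℝ) (x ξ : Vec d) :
    Matrix (Fin 2) (Fin 2) ℂ :=
  !![a2til F u χ R x ξ, b2til F u χ R x ξ;
     (starRingEnd ℂ) (b2til F u χ R x (-ξ)), a2til F u χ R x ξ]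

/-- The matrix `E = diag(1,-1)`. -/
def EmatM : Matrix (Fin 2) (Fin 2) ℂ := !![1, 0; 0, -1]

/-- The matrix of symbols `S^{-1}(x,ξ)`. -/
def SinvMatSym (F : (Fin (d + 1) → ℂ) → ℂ) (u : Fn d) (χ : ℝ → ℝ) (R : ℝ) :
    Fin 2 → Fin 2 → Sym d :=
  ![![s1sym F u χ R, fun x ξ => -s2sym F u χ R x ξ],
    ![fun x ξ => -(starRingEnd ℂ) (s2sym F u χ R x ξ), s1sym F u χ R]]

/-- The entry `s₁^{(1)}` of the matrix `S₁`. -/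
def s1_1 (F : (Fin (d + 1) → ℂ) → ℂ) (u : Fn d) (χ : ℝ → ℝ) (R : ℝ) : Sym d := fun x ξ =>
  1 / (2 * Complex.I) *
    (poisson (s2sym F u χ R) (starSym (s2sym F u χ R)) x ξ * s1sym F u χ R x ξ
      + 2 * poisson (s1sym F u χ R) (s2sym F u χ R) x ξ *
          (starRingEnd ℂ) (s2sym F u χ R x ξ))

/-- The entry `s₂^{(1)}` of the matrix `S₁`. -/
def s2_1 (F : (Fin (d + 1) → ℂ) → ℂ) (u : Fn d) (χ : ℝ → ℝ) (R : ℝ) : Sym d := fun x ξ =>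
  1 / (2 * Complex.I) *
    (poisson (s2sym F u χ R) (starSym (s2sym F u χ R)) x ξ * s2sym F u χ R x ξ
      + 2 * poisson (s1sym F u χ R) (s2sym F u χ R) x ξ * s1sym F u χ R x ξ)

/-- The matrix `S₁(x,ξ)`. -/
def S1mat (F : (Fin (d + 1) → ℂ) → ℂ) (u : Fn d) (χ : ℝ → ℝ) (R : ℝ) (x ξ : Vec d) :
    Matrix (Fin 2) (Fin 2) ℂ :=
  (1 / (2 * Complex.I)) •
    (!![poisson (s2sym F u χ R) (starSym (s2sym F u χ R)) x ξ,
          2 * poisson (s1sym F u χ R) (s2sym F u χ R) x ξ;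
        -2 * poisson (s1sym F u χ R) (starSym (s2sym F u χ R)) x (-ξ),
          poisson (s2sym F u χ R) (starSym (s2sym F u χ R)) x (-ξ)] *
      Smat F u χ R x ξ)

/-- The symbol `g₁`. -/
def g1sym (F : (Fin (d + 1) → ℂ) → ℂ) (u : Fn d) (χ : ℝ → ℝ) (R : ℝ) : Sym d := fun x ξ =>
  1 / (2 * Complex.I) * poisson (s1_1 F u χ R) (s1sym F u χ R) x ξ
    - 1 / (2 * Complex.I) * poisson (s2_1 F u χ R) (starSym (s2sym F u χ R)) x ξ
    + 1 / 8 * sigmaB (s2sym F u χ R) (starSym (s2sym F u χ R)) x ξ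

/-- The symbol `g₂`. -/
def g2sym (F : (Fin (d + 1) → ℂ) → ℂ) (u : Fn d) (χ : ℝ → ℝ) (R : ℝ) : Sym d := fun x ξ =>
  -(1 / (2 * Complex.I)) * poisson (s1_1 F u χ R) (s2sym F u χ R) x ξ
    + 1 / (2 * Complex.I) * poisson (s2_1 F u χ R) (s1sym F u χ R) x ξ

/-- The derivative operator `∂_{x_i}` at the level of Fourier coefficients. -/
def dOp (i : Fin d) (c : Seq d) : Seq d := fun n => Complex.I * ((n i : ℝ) : ℂ) * c n

/-- A positive constant depending monotonically on a size parameter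
(hence bounded from above as the parameter goes to zero). -/
def GoodConst (C : ℝ → ℝ) : Prop := Monotone C ∧ ∀ x : ℝ, 0 < C x

/-- normalizing constant -/
def cst (d : ℕ) : ℝ := (2 * π : ℝ) ^ (-(d : ℝ) / 2)

lemma cst_pos (d : ℕ) : 0 < cst d := Real.rpow_pos_of_pos (by positivity) _

lemma cst_sq (d : ℕ) : cst d * cst d = ((2 * π) ^ d)⁻¹ := by
  unfold cst
  rw [← Real.rpow_add (by positivity), ← Real.rpow_natCast, ← Real.rpow_neg (by positivity)]
  congr 1; ring

lemma box_subset (d : ℕ) : box d ⊆ Set.Icc (0 : Vec d) (fun _ => 2 * π) := by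
  intro x hx
  simp only [box, Set.mem_pi, Set.mem_univ, true_implies, Set.mem_Ioc] at hx
  exact ⟨fun i => (hx i).1.le, fun i => (hx i).2⟩

lemma measurableSet_box (d : ℕ) : MeasurableSet (box d) :=
  MeasurableSet.univ_pi fun _ => measurableSet_Ioc

lemma integrableOn_box {u : Fn d} (hu : Continuous u) : IntegrableOn u (box d) :=
  (hu.continuousOn.integrableOn_compact (isCompact_Icc)).mono_set (box_subset d)

lemma box_vol_lt (d : ℕ) : volume (box d) < ⊤ :=
  (measure_mono (box_subset d)).trans_lt isCompact_Icc.measure_lt_top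

lemma box_vol (d : ℕ) : volume.real (box d) = (2 * π) ^ d := by
  rw [Measure.real, box, Real.volume_pi_Ioc]
  rw [← ENNReal.ofReal_prod_of_nonneg (fun i _ => by simp; positivity)]
  simp only [sub_zero, Finset.prod_const, Finset.card_univ, Fintype.card_fin]
  rw [ENNReal.toReal_ofReal (by positivity)]

lemma cont_exp (z : ℂ) (n : Zd d) :
    Continuous fun x : Vec d => Complex.exp (z * ((∑ i, (n i : ℝ) * x i : ℝ) : ℂ)) := by
  fun_prop

lemma norm_exp_I (t : ℝ) : ‖Complex.exp (Complex.I * (t : ℂ))‖ = 1 := by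
  rw [mul_comm]; exact Complex.norm_exp_ofReal_mul_I t

lemma norm_exp_negI (t : ℝ) : ‖Complex.exp (-Complex.I * (t : ℂ))‖ = 1 := by
  have := norm_exp_I (-t)
  rwa [show Complex.I * ((-t : ℝ) : ℂ) = -Complex.I * t by push_cast; ring] at this

lemma norm_fCoeff_le {u : Fn d} {M : ℝ} (h : ∀ x, ‖u x‖ ≤ M) (n : Zd d) :
    ‖fCoeff u n‖ ≤ cst d * (2 * π) ^ d * M := by
  unfold fCoeff
  change ‖((cst d : ℝ) : ℂ) * _‖ ≤ _
  rw [norm_mul, Complex.norm_real, Real.norm_of_nonneg (cst_pos d).le, mul_assoc]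
  gcongr
  · exact (cst_pos d).le
  · have := norm_setIntegral_le_of_norm_le_const (μ := volume) (C := M)
      (f := fun x => u x * Complex.exp (-Complex.I * ((∑ i, (n i : ℝ) * x i : ℝ) : ℂ)))
      (box_vol_lt d) (fun x _ => by rw [norm_mul, norm_exp_negI, mul_one]; exact h x)
    rw [box_vol] at this
    linarith

open scoped Pointwise in
lemma fourier_inv {u : Fn d} (hc : Continuous u) (hp : Periodic2pi u)
    (hs : Summable (fCoeff u)) (x : Vec d) :
    HasSum (fun n : Zd d => (cst d : ℂ) * fCoeff u n *
        Complex.exp (Complex.I * ((∑ i, (n i : ℝ) * x i : ℝ) : ℂ))) (u x) := by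
  have hQ : IsOpenQuotientMap (Pi.map (fun (_ : Fin d) (t : ℝ) => (t : UnitAddCircle))) :=
    IsOpenQuotientMap.piMap fun _ => QuotientAddGroup.isOpenQuotientMap_mk
  set Q : Vec d → UnitAddTorus (Fin d) := Pi.map (fun (_ : Fin d) (t : ℝ) => (t : UnitAddCircle)) with hQd
  let g : UnitAddTorus (Fin d) → ℂ := fun y => u ((2 * π) • Function.surjInv hQ.surjective y)
  have hg : ∀ z, g (Q z) = u ((2 * π) • z) := by
    intro z
    have h1 := Function.surjInv_eq hQ.surjective (Q z)
    have h2 : ∀ i, ∃ n : ℤ, Function.surjInv hQ.surjective (Q z) i = z i + n := by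
      intro i
      have h3 := congrFun h1 i
      simp only [hQd, Pi.map_apply] at h3
      rw [← sub_eq_zero, ← AddCircle.coe_sub, AddCircle.coe_eq_zero_iff] at h3
      obtain ⟨n, hn⟩ := h3
      refine ⟨n, ?_⟩
      simp at hn
      rw [hn]; ring
    choose n hn using h2
    rw [← hp ((2 * π) • z) n]
    show u _ = u _
    congr 1
    ext i
    simp [hn i]; ring
  have hgc : Continuous g := by
    rw [hQ.isQuotientMap.continuous_iff]
    have : g ∘ Q = fun z => u ((2 * π) • z) := funext hg
    rw [this]; exact hc.comp (continuous_const_smul _)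
  have hcoef : ∀ n, UnitAddTorus.mFourierCoeff g n = (cst d : ℂ) * fCoeff u n := by
    intro n
    rw [UnitAddTorus.mFourierCoeff_eq_integral g n 0]
    have hset : {x : Fin d → ℝ | ∀ i, x i ∈ Set.Ioc ((0 : Fin d → ℝ) i) ((0 : Fin d → ℝ) i + 1)} =
        Set.univ.pi fun _ => Set.Ioc (0 : ℝ) 1 := by
      ext x; simp [Set.mem_pi]
    rw [hset]
    have h1 : ∀ z : Vec d, UnitAddTorus.mFourier (-n) (fun i => (z i : UnitAddCircle)) •
        g (fun i => (z i : UnitAddCircle)) =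
        (fun y => u y * Complex.exp (-Complex.I * ((∑ i, (n i : ℝ) * y i : ℝ) : ℂ))) ((2 * π) • z) := by
      intro z
      have := hg z
      rw [show Q z = (fun i => (z i : UnitAddCircle)) from rfl] at this
      rw [this, smul_eq_mul, mul_comm]
      congr 1
      simp only [UnitAddTorus.mFourier, ContinuousMap.coe_mk, fourier_coe_apply]
      rw [← Complex.exp_sum]
      congr 1
      push_cast
      rw [Finset.mul_sum]
      apply Finset.sum_congr rfl
      intro i _
      simp
      ring
    rw [funext h1]
    rw [Measure.setIntegral_comp_smul_of_pos volume (fun y : Vec d => u y * Complex.exp (-Complex.I * ((∑ i, (n i : ℝ) * y i : ℝ) : ℂ))) _ (by positivity : (0 : ℝ) < 2 * π)]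
    have h2 : (2 * π) • (Set.univ.pi fun _ : Fin d => Set.Ioc (0 : ℝ) 1) = box d := by
      rw [Set.smul_set_univ_pi]
      unfold box
      congr 1
      ext i x
      have hpi : (0:ℝ) < 2 * π := by positivity
      simp only [Pi.smul_apply, Set.mem_smul_set, smul_eq_mul, Set.mem_Ioc]
      constructor
      · rintro ⟨y, ⟨h1, h2⟩, rfl⟩
        exact ⟨by positivity, by nlinarith⟩
      · rintro ⟨h1, h2⟩
        exact ⟨x / (2 * π), ⟨by positivity, by rw [div_le_one hpi]; exact h2⟩, by field_simp⟩
    rw [h2]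
    have : fCoeff u n = (cst d : ℂ) * ∫ x in box d, u x * Complex.exp (-Complex.I * ((∑ i, (n i : ℝ) * x i : ℝ) : ℂ)) := rfl
    rw [this, ← mul_assoc, ← Complex.ofReal_mul, cst_sq]
    simp [Module.finrank_fin_fun]
  have hsum : Summable (UnitAddTorus.mFourierCoeff (⟨g, hgc⟩ : C(UnitAddTorus (Fin d), ℂ))) := by
    have : UnitAddTorus.mFourierCoeff (⟨g, hgc⟩ : C(UnitAddTorus (Fin d), ℂ)) = fun n => (cst d : ℂ) * fCoeff u n := funext hcoef
    rw [this]
    exact hs.mul_left _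
  have := UnitAddTorus.hasSum_mFourier_series_apply_of_summable hsum (Q ((2 * π)⁻¹ • x))
  have e1 : (⟨g, hgc⟩ : C(UnitAddTorus (Fin d), ℂ)) (Q ((2 * π)⁻¹ • x)) = u x := by
    show g _ = _
    rw [hg, smul_smul, mul_inv_cancel₀ (by positivity), one_smul]
  rw [e1] at this
  refine this.congr_fun ?_
  intro n
  rw [smul_eq_mul]
  rw [show UnitAddTorus.mFourierCoeff (⟨g, hgc⟩ : C(UnitAddTorus (Fin d), ℂ)) n = (cst d : ℂ) * fCoeff u n from hcoef n]
  congr 1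
  simp only [UnitAddTorus.mFourier, ContinuousMap.coe_mk, hQd, Pi.map_apply, fourier_coe_apply]
  rw [← Complex.exp_sum]
  congr 1
  push_cast
  rw [Finset.mul_sum]
  apply Finset.sum_congr rfl
  intro i _
  have : (π : ℂ) ≠ 0 := by exact_mod_cast Real.pi_ne_zero
  simp
  field_simp

lemma fCoeff_mul {u v : Fn d} (hu : Continuous u) (hpu : Periodic2pi u) (hv : Continuous v)
    (hs : Summable (fCoeff u)) (n : Zd d) :
    HasSum (fun p : Zd d => (cst d : ℂ) * (fCoeff u p * fCoeff v (n - p)))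
      (fCoeff (fun x => u x * v x) n) := by
  let F : Zd d → Vec d → ℂ := fun p x => (cst d : ℂ) * fCoeff u p *
    Complex.exp (Complex.I * ((∑ i, (p i : ℝ) * x i : ℝ) : ℂ)) *
      (v x * Complex.exp (-Complex.I * ((∑ i, (n i : ℝ) * x i : ℝ) : ℂ)))
  have hF : ∀ p, Integrable (F p) (volume.restrict (box d)) := by
    intro p
    apply integrableOn_box
    exact (continuous_const.mul (cont_exp _ _)).mul (hv.mul (cont_exp _ _))
  have hn : ∀ p x, ‖F p x‖ = cst d * ‖fCoeff u p‖ * ‖v x‖ := by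
    intro p x
    simp only [F, norm_mul, norm_exp_I, norm_exp_negI, Complex.norm_real, mul_one,
      Real.norm_of_nonneg (cst_pos d).le]
  have hsum : Summable fun p => ∫ x in box d, ‖F p x‖ := by
    simp_rw [hn, integral_const_mul]
    exact (hs.norm.mul_left _).mul_right _
  have key := hasSum_integral_of_summable_integral_norm hF hsum
  have e1 : ∀ x, ∑' p, F p x = (u x * v x) * Complex.exp (-Complex.I * ((∑ i, (n i : ℝ) * x i : ℝ) : ℂ)) := by
    intro x
    have := (fourier_inv hu hpu hs x).mul_right (v x * Complex.exp (-Complex.I * ((∑ i, (n i : ℝ) * x i : ℝ) : ℂ)))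
    rw [mul_assoc]
    exact this.tsum_eq
  simp_rw [e1] at key
  have := key.mul_left (cst d : ℂ)
  refine this.congr_fun ?_
  intro p
  have e2 : ∀ x, F p x = ((cst d : ℂ) * fCoeff u p) * (v x * Complex.exp (-Complex.I * ((∑ i, ((n - p) i : ℝ) * x i : ℝ) : ℂ))) := by
    intro x
    simp only [F]
    have : Complex.exp (-Complex.I * ((∑ i, ((n - p) i : ℝ) * x i : ℝ) : ℂ)) =
      Complex.exp (Complex.I * ((∑ i, (p i : ℝ) * x i : ℝ) : ℂ)) * Complex.exp (-Complex.I * ((∑ i, (n i : ℝ) * x i : ℝ) : ℂ)) := by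
      rw [← Complex.exp_add]
      congr 1
      rw [show (∑ i, (((n - p) i : ℤ) : ℝ) * x i) = (∑ i, (n i : ℝ) * x i) - ∑ i, (p i : ℝ) * x i by
        rw [← Finset.sum_sub_distrib]; apply Finset.sum_congr rfl; intro i _; simp; ring]
      push_cast; ring
    rw [this]; ring
  simp_rw [e2, integral_const_mul]
  simp only [fCoeff, cst]
  ring

lemma cont_pdF {w : Fn d} (hw : ContDiff ℝ 1 w) (j : Fin d) : Continuous (pdF j w) :=
  (hw.continuous_fderiv one_ne_zero).clm_apply continuous_const

lemma int_pdF_zero {w : Fn d} (hw : ContDiff ℝ 1 w) (hp : Periodic2pi w) (j : Fin d) :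
    ∫ x in box d, pdF j w x = 0 := by
  obtain ⟨m, rfl⟩ : ∃ m, d = m + 1 := ⟨d - 1, by have := j.pos; omega⟩
  have h1 : ∫ x in box (m + 1), pdF j w x = ∫ x in Set.Icc (0 : Vec (m+1)) (fun _ => 2 * π), pdF j w x :=
    setIntegral_congr_set Measure.univ_pi_Ioc_ae_eq_Icc
  rw [h1]
  have hle : (0 : Vec (m+1)) ≤ (fun _ => 2 * π) := fun i => by simp; positivity
  have key := integral_divergence_of_hasFDerivAt_off_countable' (0 : Vec (m+1)) (fun _ => 2 * π) hle
    (fun i x => if i = j then w x else 0) (fun i x => if i = j then fderiv ℝ w x else 0) ∅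
    Set.countable_empty (fun i => by
      by_cases h : i = j
      · simp only [h, if_true]; exact hw.continuous.continuousOn
      · simp only [h, if_false]; exact continuousOn_const)
    (fun x _ i => by
      by_cases h : i = j
      · simp only [h, if_true]; exact (hw.differentiable one_ne_zero x).hasFDerivAt
      · simp only [h, if_false]; exact hasFDerivAt_const _ _)
    (by
      have : (fun x : Vec (m+1) => ∑ i, (if i = j then fderiv ℝ w x else 0) (Pi.single i 1)) = pdF j w := by
        funext x
        rw [Finset.sum_eq_single j]
        · simp [pdF]
        · intro b _ hb; simp [hb]
        · simp
      rw [this]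
      exact (cont_pdF hw j).continuousOn.integrableOn_compact isCompact_Icc)
  have e : (fun x : Vec (m+1) => ∑ i, (if i = j then fderiv ℝ w x else 0) (Pi.single i 1)) = pdF j w := by
    funext x
    rw [Finset.sum_eq_single j]
    · simp [pdF]
    · intro b _ hb; simp [hb]
    · simp
  rw [e] at key
  rw [key]
  apply Finset.sum_eq_zero
  intro i _
  by_cases h : i = j
  · subst h
    simp only [if_true]
    rw [sub_eq_zero]
    apply integral_congr_ae
    refine Eventually.of_forall fun x => ?_
    have := hp (i.insertNth 0 x) (Pi.single i 1)
    show w _ = w _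
    refine Eq.trans ?_ this
    congr 1
    ext k
    rcases Fin.eq_self_or_eq_succAbove i k with rfl | ⟨k', rfl⟩
    · simp
    · simp
  · simp [h]

lemma fCoeff_pdF {u : Fn d} (hu : ContDiff ℝ 1 u) (hp : Periodic2pi u) (j : Fin d) (n : Zd d) :
    fCoeff (pdF j u) n = Complex.I * (n j : ℂ) * fCoeff u n := by
  let e : Fn d := fun x => Complex.exp (-Complex.I * ((∑ i, (n i : ℝ) * x i : ℝ) : ℂ))
  have he : ContDiff ℝ 1 e := by
    apply ContDiff.cexp
    apply contDiff_const.mul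
    have h : ContDiff ℝ 1 (fun x : Vec d => ∑ i, (n i : ℝ) * x i) :=
      ContDiff.sum fun i _ => contDiff_const.mul (contDiff_apply ℝ ℝ i)
    exact Complex.ofRealCLM.contDiff.comp h
  have hd : ∀ x, HasFDerivAt e (e x • (-Complex.I • (Complex.ofRealCLM.comp (∑ i, (n i : ℝ) • ContinuousLinearMap.proj (R := ℝ) (φ := fun _ : Fin d => ℝ) i)))) x := by
    intro x
    apply HasFDerivAt.cexp
    apply HasFDerivAt.const_mul
    have h : HasFDerivAt (fun x : Vec d => ∑ i, (n i : ℝ) * x i)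
        (∑ i, (n i : ℝ) • ContinuousLinearMap.proj (R := ℝ) (φ := fun _ : Fin d => ℝ) i) x :=
      HasFDerivAt.fun_sum fun i _ => (hasFDerivAt_apply i x).const_mul _
    exact (Complex.ofRealCLM.hasFDerivAt).comp x h
  have hpe : Periodic2pi e := by
    intro x m
    simp only [e]
    rw [Complex.exp_eq_exp_iff_exists_int]
    refine ⟨-∑ i, n i * m i, ?_⟩
    push_cast
    simp only [mul_add, Finset.sum_add_distrib, Finset.mul_sum, neg_mul, Finset.sum_neg_distrib, Finset.sum_mul]
    congr 1
    rw [neg_inj]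
    apply Finset.sum_congr rfl
    intro i _
    ring
  have h0 := int_pdF_zero (w := fun x => u x * e x) (hu.mul he)
    (fun x m => by simp only [hp x m, hpe x m]) j
  have h1 : ∀ x, pdF j (fun x => u x * e x) x = pdF j u x * e x - Complex.I * (n j : ℂ) * (u x * e x) := by
    intro x
    have h2 := ((hu.differentiable one_ne_zero x).hasFDerivAt).mul (hd x)
    have h3 : pdF j (fun x => u x * e x) x = _ := congrArg (fun L => L (Pi.single j 1)) h2.fderiv
    rw [h3]
    simp only [pdF, add_apply, smul_apply, ContinuousLinearMap.comp_apply,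
      sum_apply, ContinuousLinearMap.proj_apply, smul_eq_mul]
    rw [Finset.sum_eq_single j (by intro b _ hb; simp [hb]) (by simp)]
    simp
    ring
  simp_rw [h1] at h0
  have i1 : IntegrableOn (fun x => pdF j u x * e x) (box d) :=
    integrableOn_box ((cont_pdF hu j).mul he.continuous)
  have i2 : IntegrableOn (fun x => Complex.I * (n j : ℂ) * (u x * e x)) (box d) :=
    integrableOn_box (continuous_const.mul (hu.continuous.mul he.continuous))
  rw [integral_sub i1 i2, integral_const_mul, sub_eq_zero] at h0
  have e1 : fCoeff (pdF j u) n = (cst d : ℂ) * ∫ x in box d, pdF j u x * e x := rfl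
  have e2 : fCoeff u n = (cst d : ℂ) * ∫ x in box d, u x * e x := rfl
  rw [e1, e2, h0]; ring

/-- quantitative symbol class -/
def SB (m : ℝ) (s : ℕ) (M : ℝ) (a : Sym d) : Prop :=
  ContDiff ℝ (s : ℕ∞) (Function.uncurry a) ∧ (∀ ξ, Periodic2pi fun x => a x ξ) ∧
    ∀ L : List (Fin d ⊕ Fin d), L.length ≤ s → ∀ x ξ, ‖mderiv L a x ξ‖ ≤ M * jbR ξ ^ (m - (nXi L : ℝ))

lemma jbR_pos (ξ : Vec d) : 0 < jbR ξ := by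
  unfold jbR
  have : 0 ≤ ∑ i, ξ i ^ 2 := Finset.sum_nonneg fun i _ => sq_nonneg _
  positivity

lemma one_le_jbR (ξ : Vec d) : 1 ≤ jbR ξ := by
  unfold jbR
  have : 0 ≤ ∑ i, ξ i ^ 2 := Finset.sum_nonneg fun i _ => sq_nonneg _
  rw [Real.one_le_sqrt]; linarith

lemma hasFDerivAt_x {a : Sym d} (h : ContDiff ℝ 1 (Function.uncurry a)) (x ξ : Vec d) :
    HasFDerivAt (fun y => a y ξ) ((fderiv ℝ (Function.uncurry a) (x, ξ)).comp
      (ContinuousLinearMap.inl ℝ (Vec d) (Vec d))) x :=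
  HasFDerivAt.comp (g := Function.uncurry a) (f := fun y => (y, ξ)) x
    ((h.differentiable one_ne_zero (x, ξ)).hasFDerivAt) (hasFDerivAt_prodMk_left x ξ)

lemma hasFDerivAt_xi {a : Sym d} (h : ContDiff ℝ 1 (Function.uncurry a)) (x ξ : Vec d) :
    HasFDerivAt (fun η => a x η) ((fderiv ℝ (Function.uncurry a) (x, ξ)).comp
      (ContinuousLinearMap.inr ℝ (Vec d) (Vec d))) ξ :=
  HasFDerivAt.comp (g := Function.uncurry a) (f := fun y => (x, y)) ξ
    ((h.differentiable one_ne_zero (x, ξ)).hasFDerivAt) (hasFDerivAt_prodMk_right x ξ)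

lemma pdx_eq {a : Sym d} (h : ContDiff ℝ 1 (Function.uncurry a)) (i : Fin d) :
    Function.uncurry (pdx i a) = fun p => fderiv ℝ (Function.uncurry a) p (Pi.single i 1, 0) := by
  funext ⟨x, ξ⟩
  simp [Function.uncurry, pdx, (hasFDerivAt_x h x ξ).fderiv]

lemma pdxi_eq {a : Sym d} (h : ContDiff ℝ 1 (Function.uncurry a)) (i : Fin d) :
    Function.uncurry (pdxi i a) = fun p => fderiv ℝ (Function.uncurry a) p (0, Pi.single i 1) := by
  funext ⟨x, ξ⟩
  simp [Function.uncurry, pdxi, (hasFDerivAt_xi h x ξ).fderiv]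

lemma cd_one {a : Sym d} {s : ℕ} (h : ContDiff ℝ ((s + 1 : ℕ) : ℕ∞) (Function.uncurry a)) :
    ContDiff ℝ 1 (Function.uncurry a) := h.of_le (by exact_mod_cast Nat.le_add_left 1 s)

lemma cd_pdx {a : Sym d} {s : ℕ} (h : ContDiff ℝ ((s + 1 : ℕ) : ℕ∞) (Function.uncurry a)) (i : Fin d) :
    ContDiff ℝ (s : ℕ∞) (Function.uncurry (pdx i a)) := by
  rw [pdx_eq (cd_one h)]
  exact (h.fderiv_right (m := (s : ℕ∞)) (by norm_cast)).clm_apply contDiff_const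

lemma cd_pdxi {a : Sym d} {s : ℕ} (h : ContDiff ℝ ((s + 1 : ℕ) : ℕ∞) (Function.uncurry a)) (i : Fin d) :
    ContDiff ℝ (s : ℕ∞) (Function.uncurry (pdxi i a)) := by
  rw [pdxi_eq (cd_one h)]
  exact (h.fderiv_right (m := (s : ℕ∞)) (by norm_cast)).clm_apply contDiff_const

lemma per_pdx {a : Sym d} (h : ∀ ξ, Periodic2pi fun x => a x ξ) (i : Fin d) (ξ : Vec d) :
    Periodic2pi fun x => pdx i a x ξ := by
  intro x n
  simp only [pdx]
  have e : (fun y => a y ξ) = fun y => a (y + fun i => 2 * π * (n i : ℝ)) ξ := by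
    funext y; exact (h ξ y n).symm
  conv_rhs => rw [e]
  rw [fderiv_comp_add_right (f := fun y => a y ξ)]
  rfl

lemma per_pdxi {a : Sym d} (h : ∀ ξ, Periodic2pi fun x => a x ξ) (i : Fin d) (ξ : Vec d) :
    Periodic2pi fun x => pdxi i a x ξ := by
  intro x n
  simp only [pdxi]
  congr 2
  funext η
  exact h η x n

lemma mderiv_concat (L : List (Fin d ⊕ Fin d)) (i : Fin d ⊕ Fin d) (a : Sym d) :
    mderiv (L ++ [i]) a = mderiv L (mderiv [i] a) := by
  simp [mderiv, List.foldr_append]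

lemma mderiv_inl (i : Fin d) (a : Sym d) : mderiv [Sum.inl i] a = pdx i a := rfl
lemma mderiv_inr (i : Fin d) (a : Sym d) : mderiv [Sum.inr i] a = pdxi i a := rfl

lemma nXi_concat_inl (L : List (Fin d ⊕ Fin d)) (i : Fin d) : nXi (L ++ [Sum.inl i]) = nXi L := by
  simp [nXi]
lemma nXi_concat_inr (L : List (Fin d ⊕ Fin d)) (i : Fin d) : nXi (L ++ [Sum.inr i]) = nXi L + 1 := by
  simp [nXi, List.filter]

lemma SB.pdx {m M : ℝ} {s : ℕ} {a : Sym d} (h : SB m (s + 1) M a) (i : Fin d) :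
    SB m s M (pdx i a) := by
  refine ⟨cd_pdx h.1 i, per_pdx h.2.1 i, fun L hL x ξ => ?_⟩
  have := h.2.2 (L ++ [Sum.inl i]) (by simpa using hL) x ξ
  rwa [mderiv_concat, mderiv_inl, nXi_concat_inl] at this

lemma SB.pdxi {m M : ℝ} {s : ℕ} {a : Sym d} (h : SB m (s + 1) M a) (i : Fin d) :
    SB (m - 1) s M (pdxi i a) := by
  refine ⟨cd_pdxi h.1 i, per_pdxi h.2.1 i, fun L hL x ξ => ?_⟩
  have := h.2.2 (L ++ [Sum.inr i]) (by simpa using hL) x ξ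
  rw [mderiv_concat, mderiv_inr, nXi_concat_inr] at this
  rwa [show m - 1 - (nXi L : ℝ) = m - ((nXi L + 1 : ℕ) : ℝ) by push_cast; ring]

lemma SB.bound {m M : ℝ} {s : ℕ} {a : Sym d} (h : SB m s M a) (x ξ : Vec d) :
    ‖a x ξ‖ ≤ M * jbR ξ ^ m := by
  have := h.2.2 [] (by simp) x ξ
  simpa [mderiv, nXi] using this

lemma SB.nonneg {m M : ℝ} {s : ℕ} {a : Sym d} (h : SB m s M a) : 0 ≤ M := by
  have := (norm_nonneg _).trans (h.bound 0 0)
  have h2 := Real.rpow_pos_of_pos (jbR_pos (0 : Vec d)) m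
  by_contra hn
  push Not at hn
  nlinarith

lemma SB.zero_of {m M : ℝ} {a : Sym d} (h0 : ContDiff ℝ ((0 : ℕ) : ℕ∞) (Function.uncurry a))
    (h1 : ∀ ξ, Periodic2pi fun x => a x ξ) (h2 : ∀ x ξ, ‖a x ξ‖ ≤ M * jbR ξ ^ m) : SB m 0 M a := by
  refine ⟨h0, h1, fun L hL x ξ => ?_⟩
  have : L = [] := List.length_eq_zero_iff.mp (by omega)
  subst this
  simpa [mderiv, nXi] using h2 x ξ

lemma SB.succ_of {m M : ℝ} {s : ℕ} {a : Sym d} (h0 : ContDiff ℝ ((s + 1 : ℕ) : ℕ∞) (Function.uncurry a))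
    (h1 : ∀ ξ, Periodic2pi fun x => a x ξ) (h2 : ∀ x ξ, ‖a x ξ‖ ≤ M * jbR ξ ^ m)
    (h3 : ∀ i, SB m s M (QLNLS.pdx i a)) (h4 : ∀ i, SB (m - 1) s M (QLNLS.pdxi i a)) : SB m (s + 1) M a := by
  refine ⟨h0, h1, fun L hL x ξ => ?_⟩
  rcases List.eq_nil_or_concat' L with rfl | ⟨L', i, rfl⟩
  · simpa [mderiv, nXi] using h2 x ξ
  · rcases i with i | i
    · have := (h3 i).2.2 L' (by simpa using hL) x ξ
      rwa [mderiv_concat, mderiv_inl, nXi_concat_inl]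
    · have := (h4 i).2.2 L' (by simpa using hL) x ξ
      rw [mderiv_concat, mderiv_inr, nXi_concat_inr]
      rwa [show m - 1 - (nXi L' : ℝ) = m - ((nXi L' + 1 : ℕ) : ℝ) by push_cast; ring] at this

lemma SB.mono {m M : ℝ} {s s' : ℕ} {a : Sym d} (h : SB m s M a) (hs : s' ≤ s) : SB m s' M a :=
  ⟨h.1.of_le (by exact_mod_cast hs), h.2.1, fun L hL => h.2.2 L (hL.trans hs)⟩

lemma SB.monoM {m M M' : ℝ} {s : ℕ} {a : Sym d} (h : SB m s M a) (hs : M ≤ M') : SB m s M' a :=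
  ⟨h.1, h.2.1, fun L hL x ξ => (h.2.2 L hL x ξ).trans
    (mul_le_mul_of_nonneg_right hs (Real.rpow_nonneg (jbR_pos ξ).le _))⟩

lemma pdx_add {a b : Sym d} (ha : ContDiff ℝ 1 (Function.uncurry a)) (hb : ContDiff ℝ 1 (Function.uncurry b)) (i : Fin d) :
    pdx i (fun x ξ => a x ξ + b x ξ) = fun x ξ => pdx i a x ξ + pdx i b x ξ := by
  funext x ξ
  simp only [pdx]
  rw [fderiv_fun_add (hasFDerivAt_x ha x ξ).differentiableAt (hasFDerivAt_x hb x ξ).differentiableAt]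
  rfl

lemma pdxi_add {a b : Sym d} (ha : ContDiff ℝ 1 (Function.uncurry a)) (hb : ContDiff ℝ 1 (Function.uncurry b)) (i : Fin d) :
    pdxi i (fun x ξ => a x ξ + b x ξ) = fun x ξ => pdxi i a x ξ + pdxi i b x ξ := by
  funext x ξ
  simp only [pdxi]
  rw [fderiv_fun_add (hasFDerivAt_xi ha x ξ).differentiableAt (hasFDerivAt_xi hb x ξ).differentiableAt]
  rfl

lemma pdx_mul {a b : Sym d} (ha : ContDiff ℝ 1 (Function.uncurry a)) (hb : ContDiff ℝ 1 (Function.uncurry b)) (i : Fin d) :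
    pdx i (fun x ξ => a x ξ * b x ξ) = fun x ξ => a x ξ * pdx i b x ξ + pdx i a x ξ * b x ξ := by
  funext x ξ
  simp only [pdx]
  rw [fderiv_fun_mul (hasFDerivAt_x ha x ξ).differentiableAt (hasFDerivAt_x hb x ξ).differentiableAt]
  simp [mul_comm]

lemma pdxi_mul {a b : Sym d} (ha : ContDiff ℝ 1 (Function.uncurry a)) (hb : ContDiff ℝ 1 (Function.uncurry b)) (i : Fin d) :
    pdxi i (fun x ξ => a x ξ * b x ξ) = fun x ξ => a x ξ * pdxi i b x ξ + pdxi i a x ξ * b x ξ := by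
  funext x ξ
  simp only [pdxi]
  rw [fderiv_fun_mul (hasFDerivAt_xi ha x ξ).differentiableAt (hasFDerivAt_xi hb x ξ).differentiableAt]
  simp [mul_comm]

lemma SB.add {s : ℕ} : ∀ {m M N : ℝ} {a b : Sym d}, SB m s M a → SB m s N b →
    SB m s (M + N) (fun x ξ => a x ξ + b x ξ) := by
  induction s with
  | zero =>
    intro m M N a b ha hb
    refine SB.zero_of (ha.1.add hb.1) (fun ξ x n => ?_) (fun x ξ => ?_)
    · have h1 := ha.2.1 ξ x n; have h2 := hb.2.1 ξ x n; simp only at h1 h2 ⊢; rw [h1, h2]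
    · rw [add_mul]; exact (norm_add_le _ _).trans (add_le_add (ha.bound x ξ) (hb.bound x ξ))
  | succ s ih =>
    intro m M N a b ha hb
    refine SB.succ_of (ha.1.add hb.1) (fun ξ x n => ?_) (fun x ξ => ?_) (fun i => ?_) (fun i => ?_)
    · have h1 := ha.2.1 ξ x n; have h2 := hb.2.1 ξ x n; simp only at h1 h2 ⊢; rw [h1, h2]
    · rw [add_mul]; exact (norm_add_le _ _).trans (add_le_add (ha.bound x ξ) (hb.bound x ξ))
    · rw [pdx_add (cd_one ha.1) (cd_one hb.1)]; exact ih (ha.pdx i) (hb.pdx i)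
    · rw [pdxi_add (cd_one ha.1) (cd_one hb.1)]; exact ih (ha.pdxi i) (hb.pdxi i)

lemma SB.mul {s : ℕ} : ∀ {m n M N : ℝ} {a b : Sym d}, SB m s M a → SB n s N b →
    SB (m + n) s (2 ^ s * (M * N)) (fun x ξ => a x ξ * b x ξ) := by
  induction s with
  | zero =>
    intro m n M N a b ha hb
    refine SB.zero_of (ha.1.mul hb.1) (fun ξ x n => ?_) (fun x ξ => ?_)
    · have h1 := ha.2.1 ξ x n; have h2 := hb.2.1 ξ x n; simp only at h1 h2 ⊢; rw [h1, h2]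
    · rw [norm_mul, Real.rpow_add (jbR_pos ξ)]
      calc _ ≤ (M * jbR ξ ^ m) * (N * jbR ξ ^ n) :=
            mul_le_mul (ha.bound x ξ) (hb.bound x ξ) (norm_nonneg _) ((norm_nonneg _).trans (ha.bound x ξ))
        _ = _ := by ring
  | succ s ih =>
    intro m n M N a b ha hb
    have hM := ha.nonneg
    have hN := hb.nonneg
    refine SB.succ_of (ha.1.mul hb.1) (fun ξ x n => ?_) (fun x ξ => ?_) (fun i => ?_) (fun i => ?_)
    · have h1 := ha.2.1 ξ x n; have h2 := hb.2.1 ξ x n; simp only at h1 h2 ⊢; rw [h1, h2]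
    · rw [norm_mul, Real.rpow_add (jbR_pos ξ)]
      have h1 := mul_le_mul (ha.bound x ξ) (hb.bound x ξ) (norm_nonneg _) ((norm_nonneg _).trans (ha.bound x ξ))
      have h2 : (1:ℝ) ≤ 2 ^ (s + 1) := one_le_pow₀ (by norm_num)
      have h3 : 0 ≤ (M * jbR ξ ^ m) * (N * jbR ξ ^ n) :=
        mul_nonneg (mul_nonneg hM (Real.rpow_nonneg (jbR_pos ξ).le _)) (mul_nonneg hN (Real.rpow_nonneg (jbR_pos ξ).le _))
      calc _ ≤ _ := h1
        _ ≤ 2 ^ (s + 1) * ((M * jbR ξ ^ m) * (N * jbR ξ ^ n)) := le_mul_of_one_le_left h3 h2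
        _ = _ := by ring
    · rw [pdx_mul (cd_one ha.1) (cd_one hb.1)]
      have := (ih (ha.mono (Nat.le_succ s)) (hb.pdx i)).add (ih (ha.pdx i) (hb.mono (Nat.le_succ s)))
      rwa [show (2:ℝ) ^ s * (M * N) + 2 ^ s * (M * N) = 2 ^ (s + 1) * (M * N) by ring] at this
    · rw [pdxi_mul (cd_one ha.1) (cd_one hb.1)]
      have h1 := ih (ha.mono (Nat.le_succ s)) (hb.pdxi i)
      have h2 := ih (ha.pdxi i) (hb.mono (Nat.le_succ s))
      rw [show m + (n - 1) = m + n - 1 by ring] at h1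
      rw [show m - 1 + n = m + n - 1 by ring] at h2
      have := h1.add h2
      rwa [show (2:ℝ) ^ s * (M * N) + 2 ^ s * (M * N) = 2 ^ (s + 1) * (M * N) by ring] at this

lemma SB_const_zero (s : ℕ) : ∀ m, SB (d := d) m s 0 (fun _ _ => 0) := by
  induction s with
  | zero => exact fun m => SB.zero_of contDiff_const (fun _ _ _ => rfl) (by simp)
  | succ s ih =>
    intro m
    refine SB.succ_of contDiff_const (fun _ _ _ => rfl) (by simp) (fun i => ?_) (fun i => ?_)
    · have : pdx (d := d) i (fun _ _ => 0) = fun _ _ => 0 := by funext x ξ; simp [pdx]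
      rw [this]; exact ih _
    · have : pdxi (d := d) i (fun _ _ => 0) = fun _ _ => 0 := by funext x ξ; simp [pdxi]
      rw [this]; exact ih _

lemma SB_const (c : ℂ) (s : ℕ) : SB (d := d) 0 s ‖c‖ (fun _ _ => c) := by
  cases s with
  | zero => exact SB.zero_of contDiff_const (fun _ _ _ => rfl) (by simp)
  | succ s =>
    refine SB.succ_of contDiff_const (fun _ _ _ => rfl) (by simp) (fun i => ?_) (fun i => ?_)
    · have : pdx (d := d) i (fun _ _ => c) = fun _ _ => 0 := by funext x ξ; simp [pdx]
      rw [this]; exact (SB_const_zero s _).monoM (norm_nonneg _)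
    · have : pdxi (d := d) i (fun _ _ => c) = fun _ _ => 0 := by funext x ξ; simp [pdxi]
      rw [this]; exact (SB_const_zero s _).monoM (norm_nonneg _)

lemma SB.smul {s : ℕ} (c : ℂ) : ∀ {m M : ℝ} {a : Sym d}, SB m s M a →
    SB m s (‖c‖ * M) (fun x ξ => c * a x ξ) := by
  intro m M a ha
  have h : ∀ (L : List (Fin d ⊕ Fin d)), mderiv L (fun x ξ => c * a x ξ) = fun x ξ => c * mderiv L a x ξ := by
    intro L
    induction L with
    | nil => rfl
    | cons i L ih =>
      rcases i with i | i
      · show QLNLS.pdx i (mderiv L _) = _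
        rw [ih]; funext x ξ
        show fderiv ℝ (fun y => c * mderiv L a y ξ) x _ = c * fderiv ℝ (fun y => mderiv L a y ξ) x _
        have : (fun y => c * mderiv L a y ξ) = fun y => c • mderiv L a y ξ := rfl
        exact congrArg (fun G : Vec d → Vec d →L[ℝ] ℂ => G _ (Pi.single i 1)) (fderiv_const_smul_field (𝕜 := ℝ) (R := ℂ) c)
      · show QLNLS.pdxi i (mderiv L _) = _
        rw [ih]; funext x ξ
        show fderiv ℝ (fun y => c * mderiv L a x y) ξ _ = c * fderiv ℝ (fun y => mderiv L a x y) ξ _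

        exact congrArg (fun G : Vec d → Vec d →L[ℝ] ℂ => G _ (Pi.single i 1)) (fderiv_const_smul_field (𝕜 := ℝ) (R := ℂ) c)
  refine ⟨contDiff_const.mul ha.1, fun ξ x n => ?_, fun L hL x ξ => ?_⟩
  · have := ha.2.1 ξ x n; simp only at this ⊢; rw [this]
  · rw [h, norm_mul, mul_assoc]; gcongr; exact ha.2.2 L hL x ξ

lemma SB.sum {ι : Type*} (t : Finset ι) {m : ℝ} {s : ℕ} {M : ι → ℝ} {a : ι → Sym d}
    (h : ∀ i ∈ t, SB m s (M i) (a i)) : SB m s (∑ i ∈ t, M i) (fun x ξ => ∑ i ∈ t, a i x ξ) := by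
  classical
  induction t using Finset.induction_on with
  | empty => simpa using SB_const_zero s m
  | insert i t hi ih =>
    simp only [Finset.sum_insert hi]
    exact (h i (Finset.mem_insert_self i t)).add (ih fun k hk => h k (Finset.mem_insert_of_mem hk))

lemma SB_of_class {m : ℝ} {s : ℕ} {a : Sym d} (h : InSymClass m s a) : SB m s (symNorm m s a) a := by
  refine ⟨h.1, h.2.1, fun L hL x ξ => ?_⟩
  have := le_csSup h.2.2 (⟨L, x, ξ, hL, rfl⟩ : jbR ξ ^ (-m + (nXi L : ℝ)) * ‖mderiv L a x ξ‖ ∈ symVals m s a)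
  change _ ≤ symNorm m s a at this
  rw [show m - (nXi L : ℝ) = -(-m + (nXi L : ℝ)) by ring, Real.rpow_neg (jbR_pos ξ).le, ← div_eq_mul_inv,
    le_div_iff₀ (Real.rpow_pos_of_pos (jbR_pos ξ) _)]
  linarith

lemma rnorm_nonneg (ξ : Vec d) : 0 ≤ rnorm ξ := Real.sqrt_nonneg _

lemma cont_rnorm : Continuous (rnorm : Vec d → ℝ) := by unfold rnorm; fun_prop

lemma abs_le_rnorm (ξ : Vec d) (i : Fin d) : |ξ i| ≤ rnorm ξ := by
  unfold rnorm
  apply Real.abs_le_sqrt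
  exact Finset.single_le_sum (f := fun i => ξ i ^ 2) (fun i _ => sq_nonneg _) (Finset.mem_univ i)

lemma rnorm_smul {R : ℝ} (hR : 0 < R) (ξ : Vec d) : rnorm (R • ξ) = R * rnorm ξ := by
  unfold rnorm
  simp only [Pi.smul_apply, smul_eq_mul, mul_pow, ← Finset.mul_sum]
  rw [Real.sqrt_mul (sq_nonneg R), Real.sqrt_sq hR.le]

lemma jbR_sq (ξ : Vec d) : jbR ξ ^ 2 = 1 + rnorm ξ ^ 2 := by
  have : 0 ≤ ∑ i, ξ i ^ 2 := Finset.sum_nonneg fun i _ => sq_nonneg _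
  unfold jbR rnorm
  rw [Real.sq_sqrt (by linarith), Real.sq_sqrt this]

lemma jbR_le (ξ : Vec d) : jbR ξ ≤ 1 + rnorm ξ := by
  have := jbR_sq ξ
  have := rnorm_nonneg ξ
  have := jbR_pos ξ
  nlinarith

lemma rnorm_le_jbR (ξ : Vec d) : rnorm ξ ≤ jbR ξ := by
  have := jbR_sq ξ
  have := rnorm_nonneg ξ
  have := jbR_pos ξ
  nlinarith

lemma bdd_of_supp {h : Vec d → ℂ} (hc : Continuous h) (hs : ∀ ξ, 8 / 5 < rnorm ξ → h ξ = 0) :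
    ∃ K, 0 ≤ K ∧ ∀ ξ, ‖h ξ‖ ≤ K := by
  have hcomp : IsCompact (Set.Icc (fun _ => -(8/5) : Vec d) (fun _ => 8/5)) := isCompact_Icc
  obtain ⟨K, hK⟩ := hcomp.exists_bound_of_continuousOn hc.continuousOn
  refine ⟨max K 0, le_max_right _ _, fun ξ => ?_⟩
  by_cases h1 : 8 / 5 < rnorm ξ
  · rw [hs ξ h1]; simp
  · push Not at h1
    refine (hK ξ ⟨fun i => ?_, fun i => ?_⟩).trans (le_max_left _ _)
    · exact (abs_le.mp ((abs_le_rnorm ξ i).trans h1)).1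
    · exact (abs_le.mp ((abs_le_rnorm ξ i).trans h1)).2

lemma supp_pdF {h : Vec d → ℂ} (hs : ∀ ξ, 8 / 5 < rnorm ξ → h ξ = 0) (i : Fin d) :
    ∀ ξ, 8 / 5 < rnorm ξ → pdF i h ξ = 0 := by
  intro ξ hξ
  have : h =ᶠ[nhds ξ] fun _ => 0 := by
    filter_upwards [(isOpen_lt continuous_const cont_rnorm).mem_nhds hξ] with η hη using hs η hη
  simp [pdF, this.fderiv_eq]

lemma pdxi_scal {h : Vec d → ℂ} (hh : ContDiff ℝ (⊤ : ℕ∞) h) (R : ℝ) (i : Fin d) :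
    pdxi i (fun _ η => h (R⁻¹ • η)) = fun _ η => ((R⁻¹ : ℝ) : ℂ) * pdF i h (R⁻¹ • η) := by
  funext x ξ
  have h1 : HasFDerivAt (fun η : Vec d => h (R⁻¹ • η))
      ((fderiv ℝ h (R⁻¹ • ξ)).comp (R⁻¹ • ContinuousLinearMap.id ℝ (Vec d))) ξ :=
    HasFDerivAt.comp (g := h) (f := fun η : Vec d => R⁻¹ • η) ξ
      ((hh.differentiable (by simp) _).hasFDerivAt) ((hasFDerivAt_id ξ).const_smul R⁻¹)
  simp [pdxi, h1.fderiv, pdF]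

lemma pdx_indep (h : Vec d → ℂ) (i : Fin d) : pdx i (fun _ η => h η) = fun _ _ => 0 := by
  funext x ξ; simp [pdx]

lemma SB_scal (s : ℕ) : ∀ (n : ℕ) (h : Vec d → ℂ), ContDiff ℝ (⊤ : ℕ∞) h → (∀ ξ, 8 / 5 < rnorm ξ → h ξ = 0) →
    ∃ K, 0 ≤ K ∧ ∀ R : ℝ, 1 / 4 ≤ R →
      SB (-(n : ℝ)) s (K * R ^ n) (fun _ η => h (R⁻¹ • η)) := by
  have base : ∀ (n : ℕ) (h : Vec d → ℂ), ContDiff ℝ (⊤ : ℕ∞) h → (∀ ξ, 8 / 5 < rnorm ξ → h ξ = 0) →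
      ∃ K, 0 ≤ K ∧ ∀ R : ℝ, 1 / 4 ≤ R → ∀ ξ, ‖h (R⁻¹ • ξ)‖ ≤ K * R ^ n * jbR ξ ^ (-(n : ℝ)) := by
    intro n h hh hs
    obtain ⟨K, hK0, hK⟩ := bdd_of_supp hh.continuous hs
    refine ⟨K * 6 ^ n, by positivity, fun R hR ξ => ?_⟩
    have hR0 : 0 < R := by linarith
    have hj := jbR_pos ξ
    by_cases h1 : 8 / 5 < rnorm (R⁻¹ • ξ)
    · rw [hs _ h1]; simp; positivity
    · push Not at h1
      rw [rnorm_smul (by positivity), inv_mul_le_iff₀ hR0] at h1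
      have h2 : jbR ξ ≤ 6 * R := by linarith [jbR_le ξ]
      rw [Real.rpow_neg hj.le, Real.rpow_natCast]
      calc ‖h (R⁻¹ • ξ)‖ ≤ K := hK _
        _ = K * jbR ξ ^ n * (jbR ξ ^ n)⁻¹ := by field_simp
        _ ≤ K * (6 * R) ^ n * (jbR ξ ^ n)⁻¹ := by gcongr
        _ = _ := by rw [mul_pow]; ring
  have hcd : ∀ (h : Vec d → ℂ), ContDiff ℝ (⊤ : ℕ∞) h → ∀ (R : ℝ) (s : ℕ),
      ContDiff ℝ (s : ℕ∞) (Function.uncurry (fun (_ : Vec d) η => h (R⁻¹ • η))) := by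
    intro h hh R s
    have : ContDiff ℝ (s : ℕ∞) h := hh.of_le (by exact_mod_cast le_top)
    exact this.comp (contDiff_snd.const_smul R⁻¹)
  induction s with
  | zero =>
    intro n h hh hs
    obtain ⟨K, hK0, hK⟩ := base n h hh hs
    exact ⟨K, hK0, fun R hR => SB.zero_of (hcd h hh R 0) (fun _ _ _ => rfl) (fun x ξ => hK R hR ξ)⟩
  | succ s ih =>
    intro n h hh hs
    obtain ⟨K, hK0, hK⟩ := base n h hh hs
    have hp : ∀ i, ContDiff ℝ (⊤ : ℕ∞) (pdF i h) := fun i =>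
      (hh.fderiv_right (m := (⊤ : ℕ∞)) (by simp)).clm_apply contDiff_const
    choose K' hK0' hK' using fun i => ih (n + 1) (pdF i h) (hp i) (supp_pdF hs i)
    have hs0 : 0 ≤ ∑ i, K' i := Finset.sum_nonneg fun i _ => hK0' i
    refine ⟨K + ∑ i, K' i, by positivity, fun R hR => ?_⟩
    have hR0 : 0 < R := by linarith
    refine SB.succ_of (hcd h hh R (s + 1)) (fun _ _ _ => rfl) (fun x ξ => ?_) (fun i => ?_) (fun i => ?_)
    · refine (hK R hR ξ).trans ?_
      have := Real.rpow_nonneg (jbR_pos ξ).le (-(n : ℝ))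
      gcongr; linarith
    · rw [pdx_indep (fun η => h (R⁻¹ • η))]
      exact (SB_const_zero s _).monoM (by positivity)
    · rw [pdxi_scal hh]
      have := (hK' i R hR).smul ((R⁻¹ : ℝ) : ℂ)
      rw [show -(n : ℝ) - 1 = -((n + 1 : ℕ) : ℝ) by push_cast; ring]
      refine this.monoM ?_
      rw [Complex.norm_real, Real.norm_of_nonneg (by positivity), pow_succ]
      have : K' i ≤ ∑ i, K' i := Finset.single_le_sum (fun i _ => hK0' i) (Finset.mem_univ i)
      calc R⁻¹ * (K' i * (R ^ n * R)) = K' i * R ^ n := by field_simp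
        _ ≤ _ := by gcongr; linarith

lemma smooth_chi {χ : ℝ → ℝ} (hχ : IsCutoff χ) :
    ContDiff ℝ (⊤ : ℕ∞) (fun ξ : Vec d => ((χ (rnorm ξ) : ℝ) : ℂ)) := by
  refine Complex.ofRealCLM.contDiff.comp ?_
  rw [contDiff_iff_contDiffAt]
  intro ξ
  by_cases h : rnorm ξ = 0
  · have : (fun ξ : Vec d => χ (rnorm ξ)) =ᶠ[nhds ξ] fun _ => 1 := by
      filter_upwards [(isOpen_lt cont_rnorm continuous_const).mem_nhds
        (show rnorm ξ < 5 / 4 by rw [h]; norm_num)] with η hη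
      exact hχ.eq_one _ (by rw [abs_of_nonneg (rnorm_nonneg _)]; exact le_of_lt hη)
    exact contDiffAt_const.congr_of_eventuallyEq this
  · refine hχ.smooth.contDiffAt.comp ξ ?_
    unfold rnorm
    refine ContDiffAt.sqrt ?_ ?_
    · exact (ContDiff.sum fun i _ => (contDiff_apply ℝ ℝ i).pow 2).contDiffAt
    · intro h0; apply h; unfold rnorm; rw [h0]; simp

lemma SB_cut {χ : ℝ → ℝ} (hχ : IsCutoff χ) (s : ℕ) : ∃ K, 0 < K ∧ ∀ R : ℝ, 1 / 4 ≤ R →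
    SB (d := d) 0 s K (fun _ ξ => ((cutXR χ R ξ : ℝ) : ℂ)) ∧
    SB (d := d) 1 s (K * R⁻¹) (fun _ ξ => ((cutXR χ R ξ : ℝ) : ℂ)) := by
  set h : Vec d → ℂ := fun ξ => ((χ (rnorm ξ) : ℝ) : ℂ) with hh
  have hsm := smooth_chi (d := d) hχ
  have hsupp : ∀ ξ, 8 / 5 < rnorm ξ → h ξ = 0 := by
    intro ξ hξ
    simp only [hh]
    rw [hχ.eq_zero _ (by rw [abs_of_nonneg (rnorm_nonneg _)]; exact hξ.le)]; simp
  have hp : ∀ i, ContDiff ℝ (⊤ : ℕ∞) (pdF i h) := fun i =>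
      (hsm.fderiv_right (m := (⊤ : ℕ∞)) (by simp)).clm_apply contDiff_const
  obtain ⟨K0, hK0, hK⟩ := SB_scal s 0 h hsm hsupp
  choose K' hK0' hK' using fun i => SB_scal s 0 (pdF i h) (hp i) (supp_pdF hsupp i)
  have hs0 : 0 ≤ ∑ i, K' i := Finset.sum_nonneg fun i _ => hK0' i
  refine ⟨1 + K0 + ∑ i, K' i, by positivity, fun R hR => ?_⟩
  have hR0 : 0 < R := by linarith
  have hcut : (fun (_ : Vec d) ξ => ((cutXR χ R ξ : ℝ) : ℂ)) = fun _ ξ => 1 + (-1) * h (R⁻¹ • ξ) := by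
    funext x ξ
    simp only [cutXR, hh]
    rw [rnorm_smul (by positivity)]
    push_cast
    rw [show R⁻¹ * rnorm ξ = rnorm ξ / R by ring]; ring
  have h0 : SB (d := d) 0 s (1 + K0) (fun _ ξ => ((cutXR χ R ξ : ℝ) : ℂ)) := by
    rw [hcut]
    have h1 := hK R hR
    simp only [Nat.cast_zero, neg_zero, pow_zero, mul_one] at h1
    have := (SB_const (d := d) 1 s).add (h1.smul (-1))
    simpa using this
  refine ⟨h0.monoM (by linarith), ?_⟩
  have hb : ∀ (ξ : Vec d), ‖((cutXR χ R ξ : ℝ) : ℂ)‖ ≤ (1 + K0 + ∑ i, K' i) * R⁻¹ * jbR ξ ^ (1 : ℝ) := by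
    intro ξ
    rw [Complex.norm_real, Real.rpow_one]
    have hjp := jbR_pos ξ
    by_cases hξ : rnorm ξ / R ≤ 5 / 4
    · have : cutXR χ R ξ = 0 := by
        simp only [cutXR]
        rw [hχ.eq_one _ (by rw [abs_of_nonneg (div_nonneg (rnorm_nonneg _) hR0.le)]; exact hξ)]; simp
      rw [this]; simp; positivity
    · push Not at hξ
      have h2 := (hχ.mem (rnorm ξ / R))
      have h3 : ‖cutXR χ R ξ‖ ≤ 1 := by
        simp only [cutXR, Real.norm_eq_abs]; rw [abs_le]; constructor <;> linarith [h2.1, h2.2]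
      rw [lt_div_iff₀ hR0] at hξ
      have h4 : R ≤ jbR ξ := by linarith [rnorm_le_jbR ξ]
      have h5 : 1 ≤ R⁻¹ * jbR ξ := by rw [le_inv_mul_iff₀ hR0]; linarith
      calc _ ≤ (1:ℝ) := h3
        _ ≤ R⁻¹ * jbR ξ := h5
        _ ≤ (1 + K0 + ∑ i, K' i) * (R⁻¹ * jbR ξ) := le_mul_of_one_le_left (by positivity) (by linarith)
        _ = _ := by ring
  cases s with
  | zero => exact SB.zero_of h0.1 (fun _ _ _ => rfl) (fun x ξ => hb ξ)
  | succ s =>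
    refine SB.succ_of h0.1 (fun _ _ _ => rfl) (fun x ξ => hb ξ) (fun i => ?_) (fun i => ?_)
    · rw [pdx_indep]; exact (SB_const_zero s _).monoM (by positivity)
    · have e : pdxi (d := d) i (fun _ ξ => ((cutXR χ R ξ : ℝ) : ℂ)) = fun _ ξ => (-((R⁻¹ : ℝ) : ℂ)) * pdF i h (R⁻¹ • ξ) := by
        have h3 : pdxi (d := d) i (fun _ ξ => ((cutXR χ R ξ : ℝ) : ℂ)) = fun x ξ => (-1) * pdxi i (fun _ η => h (R⁻¹ • η)) x ξ := by
          rw [hcut]; funext x ξ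
          simp [pdxi]
        rw [h3, pdxi_scal hsm]; funext x ξ; ring
      rw [e]
      have := ((hK' i R hR).mono (Nat.le_succ s)).smul (-((R⁻¹ : ℝ) : ℂ))
      simp only [Nat.cast_zero, neg_zero, pow_zero, mul_one] at this
      rw [show (1:ℝ) - 1 = 0 by ring]
      refine this.monoM ?_
      rw [norm_neg, Complex.norm_real, Real.norm_of_nonneg (by positivity), mul_comm]
      have : K' i ≤ ∑ i, K' i := Finset.single_le_sum (fun i _ => hK0' i) (Finset.mem_univ i)
      gcongr; linarith

lemma fCoeff_add {u v : Fn d} (hu : Continuous u) (hv : Continuous v) (n : Zd d) :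
    fCoeff (fun x => u x + v x) n = fCoeff u n + fCoeff v n := by
  unfold fCoeff
  rw [← mul_add, ← integral_add]
  · simp only [add_mul]
  · exact integrableOn_box (hu.mul (cont_exp _ n))
  · exact integrableOn_box (hv.mul (cont_exp _ n))

lemma fCoeff_smul (c : ℂ) (u : Fn d) (n : Zd d) :
    fCoeff (fun x => c * u x) n = c * fCoeff u n := by
  unfold fCoeff
  simp only [mul_assoc]
  rw [integral_const_mul]; ring

lemma fCoeff_sub {u v : Fn d} (hu : Continuous u) (hv : Continuous v) (n : Zd d) :
    fCoeff (fun x => u x - v x) n = fCoeff u n - fCoeff v n := by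
  have := fCoeff_add hu (v := fun x => (-1) * v x) (continuous_const.mul hv) n
  rw [fCoeff_smul] at this
  simp only [neg_mul, one_mul, ← sub_eq_add_neg] at this
  exact this

lemma fCoeff_zero (n : Zd d) : fCoeff (fun _ => (0:ℂ)) n = 0 := by simp [fCoeff]

lemma fCoeff_sum {ι : Type*} (t : Finset ι) {u : ι → Fn d} (hu : ∀ i, Continuous (u i)) (n : Zd d) :
    fCoeff (fun x => ∑ i ∈ t, u i x) n = ∑ i ∈ t, fCoeff (u i) n := by
  classical
  induction t using Finset.induction_on with
  | empty => simp [fCoeff_zero]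
  | insert i t hi ih =>
    simp only [Finset.sum_insert hi]
    rw [fCoeff_add (hu i) (continuous_finsetSum _ fun i _ => hu i), ih]

lemma SB.cont {m M : ℝ} {s : ℕ} {a : Sym d} (h : SB m s M a) : Continuous (Function.uncurry a) :=
  h.1.continuous

lemma SB.cont_x {m M : ℝ} {s : ℕ} {a : Sym d} (h : SB m s M a) (ξ : Vec d) : Continuous fun x => a x ξ :=
  h.cont.comp (f := fun x => (x, ξ)) (by fun_prop)

lemma symCoeff_pdx {m M : ℝ} {s : ℕ} {a : Sym d} (h : SB m (s + 1) M a) (i : Fin d) (p : Zd d) (ξ : Vec d) :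
    symCoeff (pdx i a) p ξ = Complex.I * (p i : ℂ) * symCoeff a p ξ := by
  refine fCoeff_pdF (u := fun x => a x ξ) ?_ (h.2.1 ξ) i p
  exact (cd_one h.1).comp (f := fun x : Vec d => (x, ξ)) (by fun_prop)

lemma jb_le_sum (p : Zd d) : jb p ≤ 1 + ∑ i, |(p i : ℝ)| := by
  unfold jb
  have h0 : 0 ≤ ∑ i, |(p i : ℝ)| := Finset.sum_nonneg fun i _ => abs_nonneg _
  rw [Real.sqrt_le_left (by linarith)]
  have : ∑ i, (p i : ℝ) ^ 2 ≤ (∑ i, |(p i : ℝ)|) ^ 2 := by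
    have := Finset.sum_sq_le_sq_sum_of_nonneg (s := Finset.univ) (f := fun i => |(p i : ℝ)|) (fun i _ => abs_nonneg _)
    simpa using this
  nlinarith

lemma jb_pos (p : Zd d) : 0 < jb p := by
  unfold jb
  have : 0 ≤ ∑ i, (p i : ℝ) ^ 2 := Finset.sum_nonneg fun i _ => sq_nonneg _
  positivity

lemma one_le_jb (p : Zd d) : 1 ≤ jb p := by
  unfold jb
  have : 0 ≤ ∑ i, (p i : ℝ) ^ 2 := Finset.sum_nonneg fun i _ => sq_nonneg _
  rw [Real.one_le_sqrt]; linarith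

/-- decay constant -/
def Cd (d s : ℕ) : ℝ := cst d * (2 * π) ^ d * (1 + d) ^ s

lemma Cd_pos (d s : ℕ) : 0 < Cd d s := by
  have := cst_pos d
  unfold Cd; positivity

lemma symCoeff_decay (s : ℕ) : ∀ {m M : ℝ} {a : Sym d}, SB m s M a → ∀ (p : Zd d) (ξ : Vec d),
    jb p ^ s * ‖symCoeff a p ξ‖ ≤ Cd d s * M * jbR ξ ^ m := by
  induction s with
  | zero =>
    intro m M a h p ξ
    have := norm_fCoeff_le (u := fun x => a x ξ) (fun x => h.bound x ξ) p
    simp only [Cd, pow_zero, one_mul, mul_one]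
    refine this.trans (le_of_eq (by ring))
  | succ s ih =>
    intro m M a h p ξ
    have h0 := ih (h.mono (Nat.le_succ s)) p ξ
    have hi := fun i => ih (h.pdx i) p ξ
    have hj := jb_pos p
    have hM : 0 ≤ M := h.nonneg
    calc jb p ^ (s+1) * ‖symCoeff a p ξ‖ = jb p * (jb p ^ s * ‖symCoeff a p ξ‖) := by ring
      _ ≤ (1 + ∑ i, |(p i : ℝ)|) * (jb p ^ s * ‖symCoeff a p ξ‖) := by
          gcongr; exact jb_le_sum p
      _ = jb p ^ s * ‖symCoeff a p ξ‖ + ∑ i, jb p ^ s * ‖symCoeff (QLNLS.pdx i a) p ξ‖ := by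
          rw [add_mul, one_mul, Finset.sum_mul]
          congr 1
          refine Finset.sum_congr rfl fun i _ => ?_
          rw [symCoeff_pdx h]
          simp only [norm_mul, Complex.norm_I, one_mul, Complex.norm_intCast]
          ring
      _ ≤ Cd d s * M * jbR ξ ^ m + ∑ i : Fin d, Cd d s * M * jbR ξ ^ m := by
          exact add_le_add h0 (Finset.sum_le_sum fun i _ => hi i)
      _ = Cd d (s+1) * M * jbR ξ ^ m := by
          simp only [Finset.sum_const, Finset.card_univ, Fintype.card_fin, nsmul_eq_mul, Cd]
          ring

lemma hasDerivAt_symCoeff {m M : ℝ} {s : ℕ} {a : Sym d} (h : SB m (s + 1) M a) (p : Zd d) (ξ v : Vec d) (t : ℝ) :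
    HasDerivAt (fun t : ℝ => symCoeff a p (ξ + t • v))
      (∑ i, (v i : ℂ) * symCoeff (pdxi i a) p (ξ + t • v)) t := by
  have hc1 := cd_one h.1
  set e : Vec d → ℂ := fun x => Complex.exp (-Complex.I * ((∑ i, (p i : ℝ) * x i : ℝ) : ℂ)) with he
  have hec : Continuous e := cont_exp _ p
  set G : ℝ → Vec d → ℂ := fun t x => (∑ i, (v i : ℂ) * pdxi i a x (ξ + t • v)) with hG
  have hGc : Continuous (Function.uncurry G) := by
    simp only [hG, Function.uncurry_def]
    refine continuous_finsetSum _ fun i _ => continuous_const.mul ?_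
    exact (h.pdxi i).cont.comp (f := fun q : ℝ × Vec d => (q.2, ξ + q.1 • v)) (by fun_prop)
  have hGx : ∀ t, Continuous (G t) := fun t => hGc.comp (f := fun x => (t, x)) (by fun_prop)
  have hac : ∀ t : ℝ, Continuous fun x => a x (ξ + t • v) := fun t => h.cont_x _
  obtain ⟨B, hB⟩ := ((isCompact_Icc (a := t - 1) (b := t + 1)).prod
    (isCompact_Icc (a := (0 : Vec d)) (b := fun _ => 2 * π))).exists_bound_of_continuousOn hGc.continuousOn
  have hd : ∀ x t, HasDerivAt (fun t : ℝ => a x (ξ + t • v)) (G t x) t := by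
    intro x t
    have h1 := hasFDerivAt_xi hc1 x (ξ + t • v)
    have h2 : HasDerivAt (fun t : ℝ => ξ + t • v) v t := by
      simpa using ((hasDerivAt_id t).smul_const v).const_add ξ
    have h3 := h1.comp_hasDerivAt t h2
    refine h3.congr_deriv (Eq.symm ?_)
    change ∑ i, (v i : ℂ) * pdxi i a x (ξ + t • v) = _
    have : v = ∑ i, v i • (Pi.single i (1:ℝ) : Vec d) := by
      funext k; simp [Finset.sum_apply, Pi.single_apply]
    conv_rhs => rw [this]
    rw [map_sum]
    refine Finset.sum_congr rfl fun i _ => ?_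
    rw [map_smul, Complex.real_smul]
    congr 1
    simp only [pdxi, h1.fderiv]
    rw [← this]
  have key := hasDerivAt_integral_of_dominated_loc_of_deriv_le (μ := volume.restrict (box d)) (𝕜 := ℝ)
    (F := fun t x => a x (ξ + t • v) * e x) (F' := fun t x => G t x * e x) (x₀ := t)
    (s := Set.Icc (t-1) (t+1)) (bound := fun _ => B) (Icc_mem_nhds (by linarith) (by linarith))
    (Eventually.of_forall fun t => (integrableOn_box ((hac t).mul hec)).aestronglyMeasurable)
    (integrableOn_box ((hac t).mul hec)) (integrableOn_box ((hGx t).mul hec)).aestronglyMeasurable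
    ((ae_restrict_mem (measurableSet_box d)).mono fun x hx τ hτ => by
      rw [norm_mul, he]; simp only
      rw [norm_exp_negI, mul_one]
      exact hB (τ, x) ⟨hτ, box_subset d hx⟩)
    (integrableOn_const (hs := (box_vol_lt d).ne))
    (Eventually.of_forall fun x τ _ => (hd x τ).mul_const _)
  have h2 := key.2.const_mul ((cst d : ℝ) : ℂ)
  refine h2.congr_deriv ?_
  change fCoeff (G t) p = _
  simp only [hG]
  rw [fCoeff_sum Finset.univ (u := fun i x => (v i : ℂ) * pdxi i a x (ξ + t • v))
    (fun i => continuous_const.mul ((h.pdxi i).cont_x _))]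
  refine Finset.sum_congr rfl fun i _ => ?_
  rw [fCoeff_smul]; rfl

/-- iterated directional derivatives of the coefficients -/
def dn : ℕ → Sym d → Vec d → Zd d → Vec d → ℂ
  | 0, a, _, p, ξ => symCoeff a p ξ
  | r + 1, a, v, p, ξ => ∑ i, (v i : ℂ) * dn r (pdxi i a) v p ξ

lemma hasDerivAt_dn (r : ℕ) : ∀ {m M : ℝ} {s : ℕ} {a : Sym d}, SB m (s + r + 1) M a →
    ∀ (p : Zd d) (ξ v : Vec d) (t : ℝ),
    HasDerivAt (fun t : ℝ => dn r a v p (ξ + t • v)) (dn (r + 1) a v p (ξ + t • v)) t := by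
  induction r with
  | zero => intro m M s a h p ξ v t; exact hasDerivAt_symCoeff h p ξ v t
  | succ r ih =>
    intro m M s a h p ξ v t
    have := fun i => (ih (s := s) (h.pdxi i) p ξ v t).const_mul (v i : ℂ)
    have h2 := HasDerivAt.fun_sum (u := Finset.univ) (fun i _ => this i)
    exact h2

lemma dn_bound (r s : ℕ) : ∀ {m M : ℝ} {a : Sym d}, SB m (s + r) M a →
    ∀ (p : Zd d) (ξ v : Vec d),
    jb p ^ s * ‖dn r a v p ξ‖ ≤ (∑ i, |v i|) ^ r * (Cd d s * M * jbR ξ ^ (m - r)) := by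
  induction r with
  | zero => intro m M a h p ξ v; simpa [dn] using symCoeff_decay s h p ξ
  | succ r ih =>
    intro m M a h p ξ v
    have h1 := fun i => ih (h.pdxi i) p ξ v
    have hj := jb_pos p
    calc jb p ^ s * ‖dn (r+1) a v p ξ‖ ≤ jb p ^ s * ∑ i, |v i| * ‖dn r (pdxi i a) v p ξ‖ := by
          gcongr
          refine (norm_sum_le _ _).trans (le_of_eq ?_)
          simp
      _ = ∑ i, |v i| * (jb p ^ s * ‖dn r (pdxi i a) v p ξ‖) := by
          rw [Finset.mul_sum]; refine Finset.sum_congr rfl fun i _ => by ring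
      _ ≤ ∑ i, |v i| * ((∑ i, |v i|) ^ r * (Cd d s * M * jbR ξ ^ (m - 1 - r))) := by
          exact Finset.sum_le_sum fun i _ => mul_le_mul_of_nonneg_left (h1 i) (abs_nonneg _)
      _ = _ := by
          rw [← Finset.sum_mul]
          have : m - 1 - r = m - ((r + 1 : ℕ) : ℝ) := by push_cast; ring
          rw [this]; ring

lemma symCoeff_pdxi_pdx {m M : ℝ} {s : ℕ} {a : Sym d} (h : SB m (s + 2) M a) (j k : Fin d) (p : Zd d) (ξ : Vec d) :
    symCoeff (pdxi j (pdx k a)) p ξ = Complex.I * (p k : ℂ) * symCoeff (pdxi j a) p ξ := by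
  have h1 := hasDerivAt_symCoeff (s := s) (h.pdx k) p ξ (Pi.single j 1) 0
  have h2 := (hasDerivAt_symCoeff (s := s) (h.mono (by omega)) p ξ (Pi.single j 1) 0).const_mul (Complex.I * (p k : ℂ))
  have h3 := h1.unique (h2.congr_of_eventuallyEq (Eventually.of_forall fun t => symCoeff_pdx (s := s + 1) h k p _))
  have hs : ∀ f : Fin d → ℂ, ∑ i, (((Pi.single j 1 : Vec d) i : ℝ) : ℂ) * f i = f j := by
    intro f
    rw [Finset.sum_eq_single j]
    · simp
    · intro b _ hb; simp [hb]
    · simp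
  rw [hs, hs] at h3
  simpa using h3

/-- real vector of a lattice point -/
def rv (n : Zd d) : Vec d := fun i => (n i : ℝ)

lemma jb_eq (n : Zd d) : jb n = jbR (rv n) := rfl
lemma znorm_eq (n : Zd d) : znorm n = rnorm (rv n) := rfl

lemma znorm_nonneg (n : Zd d) : 0 ≤ znorm n := Real.sqrt_nonneg _

lemma rnorm_eq_norm (x : Vec d) : rnorm x = ‖WithLp.toLp 2 x‖ := by
  rw [EuclideanSpace.norm_eq]
  simp [rnorm]

lemma rnorm_add_le (x y : Vec d) : rnorm (x + y) ≤ rnorm x + rnorm y := by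
  simp only [rnorm_eq_norm, WithLp.toLp_add]
  exact norm_add_le _ _

lemma rnorm_smul' (t : ℝ) (x : Vec d) : rnorm (t • x) = |t| * rnorm x := by
  simp only [rnorm_eq_norm, WithLp.toLp_smul, norm_smul, Real.norm_eq_abs]

lemma rnorm_neg (x : Vec d) : rnorm (-x) = rnorm x := by
  simp only [rnorm_eq_norm, WithLp.toLp_neg, norm_neg]

lemma jbR_lip (x y : Vec d) : jbR x ≤ jbR y + rnorm (x - y) := by
  have h1 := rnorm_add_le y (x - y)
  rw [add_sub_cancel] at h1
  have h2 := jbR_sq x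
  have h3 := jbR_sq y
  have h4 := rnorm_le_jbR y
  have h5 := rnorm_nonneg (x - y)
  have h6 := jbR_pos x
  have h7 := jbR_pos y
  have h8 := rnorm_nonneg x
  have h9 := rnorm_nonneg y
  refine (sq_le_sq₀ (jbR_pos _).le (by positivity)).mp ?_
  nlinarith [mul_le_mul_of_nonneg_left h4 h5]

lemma jbR_lip' (x y : Vec d) : jbR x ≤ jbR y + rnorm (y - x) := by
  rw [← rnorm_neg, neg_sub]; exact jbR_lip x y

/-- comparability -/
def Cmp (K x y : ℝ) : Prop := x ≤ K * y ∧ y ≤ K * x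

lemma Cmp.symm {K x y : ℝ} (h : Cmp K x y) : Cmp K y x := ⟨h.2, h.1⟩

lemma Cmp.trans {K L x y z : ℝ} (hK : 0 ≤ K) (hL : 0 ≤ L) (h : Cmp K x y) (h' : Cmp L y z) : Cmp (K * L) x z := by
  refine ⟨h.1.trans ?_, h'.2.trans ?_⟩
  · rw [mul_assoc]; gcongr; exact h'.1
  · rw [mul_comm K, mul_assoc]; gcongr; exact h.2

lemma Cmp.mono {K L x y : ℝ} (hx : 0 ≤ x) (hy : 0 ≤ y) (h : Cmp K x y) (hKL : K ≤ L) : Cmp L x y :=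
  ⟨h.1.trans (by gcongr), h.2.trans (by gcongr)⟩

lemma Cmp.rpow {K x y : ℝ} (hK : 1 ≤ K) (hx : 0 < x) (hy : 0 < y) (h : Cmp K x y) (m : ℝ) :
    x ^ m ≤ K ^ |m| * y ^ m := by
  rcases le_total 0 m with hm | hm
  · rw [abs_of_nonneg hm, ← Real.mul_rpow (by linarith) hy.le]
    exact Real.rpow_le_rpow hx.le h.1 hm
  · rw [abs_of_nonpos hm, Real.rpow_neg (by linarith), ← Real.inv_rpow (by linarith),
      ← Real.mul_rpow (by positivity) hy.le]
    refine Real.rpow_le_rpow_of_nonpos (by positivity) ?_ hm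
    rw [inv_mul_le_iff₀ (by linarith)]; exact h.2

lemma cmp_near {x y : Vec d} (h : rnorm (x - y) ≤ (1 / 2) * jbR y) : Cmp 2 (jbR x) (jbR y) := by
  have h1 := jbR_lip x y
  have h2 := jbR_lip' y x
  have := jbR_pos y
  constructor <;> linarith

lemma mid_sub_left (j k : Zd d) : mid j k - rv j = (1/2 : ℝ) • (-rv (j - k)) := by
  funext i; simp [mid, rv]; ring

lemma mid_sub_right (j k : Zd d) : mid j k - rv k = (1/2 : ℝ) • rv (j - k) := by
  funext i; simp [mid, rv]; ring

lemma jb_add_le (j k : Zd d) : jb (j + k) ≤ 2 * jbR (mid j k) := by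
  rw [jb_eq, show rv (j + k) = (2:ℝ) • mid j k by funext i; simp [mid, rv]; ring]
  have h1 := jbR_sq ((2:ℝ) • mid j k)
  have h2 := jbR_sq (mid j k)
  rw [rnorm_smul'] at h1
  have := jbR_pos (mid j k)
  refine (sq_le_sq₀ (jbR_pos _).le (by positivity)).mp ?_
  rw [h1, mul_pow 2 (jbR _), h2, abs_of_pos (by norm_num)]; nlinarith

lemma le_jb_add (j k : Zd d) : jbR (mid j k) ≤ jb (j + k) := by
  rw [jb_eq, show rv (j + k) = (2:ℝ) • mid j k by funext i; simp [mid, rv]; ring]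
  have h1 := jbR_sq ((2:ℝ) • mid j k)
  have h2 := jbR_sq (mid j k)
  rw [rnorm_smul'] at h1
  have := jbR_pos ((2:ℝ) • mid j k)
  refine (sq_le_sq₀ (jbR_pos _).le (by positivity)).mp ?_
  rw [h1, h2]; norm_num; nlinarith [sq_nonneg (rnorm (mid j k))]

lemma cut_cmp {χ : ℝ → ℝ} (hχ : IsCutoff χ) {ε : ℝ} (hε₀ : 0 < ε) (hε₁ : ε < 1 / 4) {j k : Zd d}
    (h : cutFactor χ ε j k ≠ 0) : Cmp 2 (jb j) (jbR (mid j k)) ∧ Cmp 2 (jb k) (jbR (mid j k)) := by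
  have hp : 0 < ε * jb (j + k) := mul_pos hε₀ (jb_pos _)
  have h1 : znorm (j - k) < 8 / 5 * (ε * jb (j + k)) := by
    by_contra hc
    push Not at hc
    apply h
    unfold cutFactor
    apply hχ.eq_zero
    rw [abs_of_nonneg (div_nonneg (znorm_nonneg _) hp.le), le_div_iff₀ hp]
    exact hc
  rw [znorm_eq] at h1
  have h2 := jb_add_le j k
  have hm := jbR_pos (mid j k)
  have hb := jb_pos (j + k)
  have h3 : rnorm (rv (j - k)) ≤ 4 / 5 * jbR (mid j k) := by nlinarith
  have a1 := jbR_lip (mid j k) (rv j)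
  have a2 := jbR_lip' (rv j) (mid j k)
  have b1 := jbR_lip (mid j k) (rv k)
  have b2 := jbR_lip' (rv k) (mid j k)
  rw [mid_sub_left, rnorm_smul', rnorm_neg] at a1 a2
  rw [mid_sub_right, rnorm_smul'] at b1 b2
  rw [abs_of_pos (by norm_num)] at a1 a2 b1 b2
  rw [jb_eq, jb_eq]
  refine ⟨⟨?_, ?_⟩, ⟨?_, ?_⟩⟩ <;> linarith

lemma cut_one {χ : ℝ → ℝ} (hχ : IsCutoff χ) {ε : ℝ} (hε₀ : 0 < ε) {j k : Zd d}
    (h : rnorm (rv (j - k)) ≤ 5 / 4 * ε * jbR (mid j k)) : cutFactor χ ε j k = 1 := by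
  have hp : 0 < ε * jb (j + k) := mul_pos hε₀ (jb_pos _)
  unfold cutFactor
  apply hχ.eq_one
  rw [abs_of_nonneg (div_nonneg (znorm_nonneg _) hp.le), div_le_iff₀ hp, znorm_eq]
  have := le_jb_add j k
  nlinarith [mul_le_mul_of_nonneg_left this hε₀.le]

lemma norm_cut_le {χ : ℝ → ℝ} (hχ : IsCutoff χ) {ε : ℝ} (j k : Zd d) : ‖((cutFactor χ ε j k : ℝ) : ℂ)‖ ≤ 1 := by
  have := hχ.mem (znorm (j - k) / (ε * jb (j + k)))
  rw [Complex.norm_real, cutFactor, Real.norm_of_nonneg this.1]; exact this.2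

lemma norm_le_jb (n : Zd d) : ‖rv n‖ ≤ jb n := by
  rw [pi_norm_le_iff_of_nonneg (jb_pos n).le]
  intro i
  rw [Real.norm_eq_abs]
  exact (abs_le_rnorm (rv n) i).trans (rnorm_le_jbR _)

lemma rv_inj : Function.Injective (rv (d := d)) := by
  intro a b h
  funext i
  have := congrFun h i
  simpa [rv] using this

lemma summable_jb {s : ℕ} (hs : d < s) : Summable fun n : Zd d => (jb n ^ s)⁻¹ := by
  let b := Pi.basisFun ℝ (Fin d)
  let L := Submodule.span ℤ (Set.range b)
  have hmem : ∀ n : Zd d, rv n ∈ L := by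
    intro n
    have : rv n = ∑ i, n i • b i := by
      funext k
      simp [rv, b, Finset.sum_apply, Pi.single_apply]
    rw [this]
    exact Submodule.sum_mem _ fun i _ => Submodule.smul_mem _ _ (Submodule.subset_span ⟨i, rfl⟩)
  have hr : Module.finrank ℤ L = d := by
    rw [ZLattice.rank ℝ L]; simp
  have h1 := ZLattice.summable_norm_pow_inv L s (by rw [hr]; exact hs)
  have h2 : Summable fun n : Zd d => (‖rv n‖⁻¹) ^ s :=
    h1.comp_injective (i := fun n : Zd d => (⟨rv n, hmem n⟩ : L)) (by
      intro a c h; exact rv_inj (congrArg Subtype.val h))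
  have h3 : Summable fun n : Zd d => if n = 0 then (1:ℝ) else 0 :=
    summable_of_ne_finset_zero (s := {0}) (by intro n hn; simp at hn; simp [hn])
  refine Summable.of_nonneg_of_le (fun n => by have := jb_pos n; positivity) (fun n => ?_) (h2.add h3)
  by_cases hn : n = 0
  · have : (jb n ^ s)⁻¹ ≤ 1 := inv_le_one_of_one_le₀ (one_le_pow₀ (one_le_jb n))
    simp only [hn, if_true] at this ⊢
    have : 0 ≤ ‖rv (0 : Zd d)‖⁻¹ ^ s := by positivity
    linarith
  · simp only [hn, if_false, add_zero]
    rw [inv_pow]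
    have h0 : 0 < ‖rv n‖ := by
      rw [norm_pos_iff]
      intro h; apply hn; apply rv_inj; rw [h]; funext i; simp [rv]
    gcongr
    exact norm_le_jb n

lemma finite_jb (N : ℝ) : {n : Zd d | jb n ≤ N}.Finite := by
  have := (summable_jb (d := d) (Nat.lt_succ_self d)).tendsto_cofinite_zero
  by_cases hN : 0 < N
  · have h1 := this.eventually (gt_mem_nhds (show (0:ℝ) < ((N+1)^(d+1))⁻¹ by positivity))
    refine h1.subset ?_
    intro n hn
    simp only [Set.mem_ofPred_eq, Nat.succ_eq_add_one, Set.mem_compl_iff, not_lt] at *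
    have := jb_pos n
    gcongr; linarith
  · convert Set.finite_empty
    ext n; simp; linarith [jb_pos n]

lemma taylor3 {f0 f1 f2 f3 : ℝ → ℂ} {C : ℝ} (h0 : ∀ t, HasDerivAt f0 (f1 t) t)
    (h1 : ∀ t, HasDerivAt f1 (f2 t) t) (h2 : ∀ t, HasDerivAt f2 (f3 t) t)
    (hC : ∀ t ∈ Set.Icc (0:ℝ) 1, ‖f3 t‖ ≤ C) :
    ‖f0 1 - (f0 0 + f1 0 + f2 0 / 2)‖ ≤ C := by
  have hu : ∀ t : ℝ, HasDerivAt (fun t : ℝ => ((1 - t : ℝ) : ℂ)) (-1) t := by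
    intro t
    have := ((hasDerivAt_id t).const_sub 1).ofReal_comp
    simpa using this
  have key : ∀ t : ℝ, HasDerivAt (fun t : ℝ => f0 t + ((1 - t : ℝ) : ℂ) * f1 t + ((1 - t : ℝ) : ℂ)^2 / 2 * f2 t)
      (((1 - t : ℝ) : ℂ)^2 / 2 * f3 t) t := by
    intro t
    have := ((h0 t).add ((hu t).mul (h1 t))).add ((((hu t).pow 2).div_const 2).mul (h2 t))
    refine this.congr_deriv ?_
    simp only [Pi.pow_apply, Nat.cast_ofNat]; ring
  have := norm_image_sub_le_of_norm_deriv_le_segment_01' (C := C) (fun t _ => (key t).hasDerivWithinAt) (fun t ht => by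
    have := hC t ⟨ht.1, ht.2.le⟩
    rw [norm_mul, norm_div, norm_pow, Complex.norm_real, Real.norm_of_nonneg (by linarith [ht.2])]
    have h3 : (1 - t)^2 / ‖(2:ℂ)‖ ≤ 1 := by
      simp; nlinarith [ht.1, ht.2]
    calc _ ≤ 1 * ‖f3 t‖ := by gcongr
      _ ≤ C := by linarith)
  simp only [sub_self, sub_zero] at this
  have e : f0 1 - (f0 0 + f1 0 + f2 0 / 2) = f0 1 + ((0:ℝ):ℂ) * f1 1 + ((0:ℝ):ℂ) ^ 2 / 2 * f2 1 -
      (f0 0 + ((1:ℝ):ℂ) * f1 0 + ((1:ℝ):ℂ) ^ 2 / 2 * f2 0) := by push_cast; ring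
  rw [e]; exact this

lemma young {H f e : Zd d → ℝ} (hH0 : ∀ n, 0 ≤ H n) (hH : Summable H) (hf : Summable fun n => f n ^ 2) (he0 : ∀ n, 0 ≤ e n)
    (he : ∀ j, ∃ S : Finset (Zd d), e j ≤ ∑ k ∈ S, H (j - k) * f k) :
    ∑' j, e j ^ 2 ≤ (∑' n, H n) ^ 2 * ∑' n, f n ^ 2 := by
  have hHj : ∀ j, Summable fun k => H (j - k) := fun j =>
    (Equiv.summable_iff (Equiv.subLeft j)).mpr hH
  have hHjt : ∀ j, ∑' k, H (j - k) = ∑' n, H n := fun j => (Equiv.subLeft j).tsum_eq H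
  have hHk : ∀ k, Summable fun j => H (j - k) := fun k =>
    (Equiv.summable_iff (Equiv.subRight k)).mpr hH
  have hHkt : ∀ k, ∑' j, H (j - k) = ∑' n, H n := fun k => (Equiv.subRight k).tsum_eq H
  set W := ∑' n, H n
  have hW : 0 ≤ W := tsum_nonneg hH0
  have hs2 : ∀ j, Summable fun k => H (j - k) * f k ^ 2 := by
    intro j
    refine Summable.of_nonneg_of_le (fun k => by have := hH0 (j-k); positivity) (fun k => ?_)
      ((hHj j).mul_right (∑' n, f n ^ 2))
    exact mul_le_mul_of_nonneg_left (hf.le_tsum k fun _ _ => sq_nonneg _) (hH0 _)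
  have h1 : ∀ j, e j ^ 2 ≤ W * ∑' k, H (j - k) * f k ^ 2 := by
    intro j
    obtain ⟨S, hS⟩ := he j
    calc e j ^ 2 ≤ (∑ k ∈ S, H (j - k) * f k) ^ 2 := by
          have := he0 j; gcongr
      _ ≤ (∑ k ∈ S, H (j - k)) * ∑ k ∈ S, H (j - k) * f k ^ 2 :=
          Finset.sum_sq_le_sum_mul_sum_of_sq_le_mul _ (fun i _ => hH0 _)
            (fun i _ => by have := hH0 (j-i); positivity) (fun i _ => le_of_eq (by ring))
      _ ≤ W * ∑' k, H (j - k) * f k ^ 2 := by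
          gcongr
          · exact Finset.sum_nonneg fun i _ => by have := hH0 (j-i); positivity
          · rw [← hHjt j]; exact (hHj j).sum_le_tsum _ fun _ _ => hH0 _
          · exact (hs2 j).sum_le_tsum _ fun i _ => by have := hH0 (j-i); positivity
  refine Real.tsum_le_of_sum_le (fun j => sq_nonneg _) fun S => ?_
  calc ∑ j ∈ S, e j ^ 2 ≤ ∑ j ∈ S, W * ∑' k, H (j - k) * f k ^ 2 := Finset.sum_le_sum fun j _ => h1 j
    _ = W * ∑' k, ∑ j ∈ S, H (j - k) * f k ^ 2 := by
        rw [← Finset.mul_sum, Summable.tsum_finsetSum (fun j _ => hs2 j)]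
    _ ≤ W * ∑' k, W * f k ^ 2 := by
        gcongr with k
        · exact summable_sum fun j _ => hs2 j
        · exact hf.mul_left W
        · rw [← Finset.sum_mul]
          gcongr
          rw [← hHkt k]; exact (hHk k).sum_le_tsum _ fun _ _ => hH0 _
    _ = _ := by rw [tsum_mul_left]; ring

/-- constant in the term bound -/
def TC (d s₀ : ℕ) (μ₁ μ₂ Λ : ℝ) : ℝ := (1 + d) ^ 3 * Cd d (s₀ + 4) ^ 2 * 8 ^ (|μ₁| + |μ₂| + 3) * Λ ^ 3

lemma TC_nonneg (d s₀ : ℕ) (μ₁ μ₂ : ℝ) {Λ : ℝ} (hΛ : 1 ≤ Λ) : 0 ≤ TC d s₀ μ₁ μ₂ Λ := by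
  have := Cd_pos d (s₀+4)
  unfold TC; positivity

/-- the lattice weight -/
def Gw (s₀ : ℕ) (p : Zd d) : ℝ := (jb p ^ (s₀ + 1))⁻¹

lemma Gw_pos (s₀ : ℕ) (p : Zd d) : 0 < Gw s₀ p := by
  have := jb_pos p
  unfold Gw; positivity

lemma Cd_mono {s s' : ℕ} (h : s ≤ s') : Cd d s ≤ Cd d s' := by
  unfold Cd
  have := cst_pos d
  gcongr
  have : (0:ℝ) ≤ d := Nat.cast_nonneg d
  linarith

lemma abs_coord_le (q : Zd d) (i : Fin d) : |(q i : ℝ)| ≤ jb q :=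
  (abs_le_rnorm (rv q) i).trans (rnorm_le_jbR _)

lemma sum_half_le (q : Zd d) : ∑ i, |((1/2 : ℝ) • rv q) i| ≤ (1 + d) * jb q := by
  have h := jb_pos q
  calc ∑ i, |((1/2 : ℝ) • rv q) i| ≤ ∑ i : Fin d, jb q := by
        refine Finset.sum_le_sum fun i _ => ?_
        have := abs_coord_le q i
        simp only [Pi.smul_apply, smul_eq_mul, abs_mul, rv]
        rw [abs_of_pos (by norm_num)]
        have := abs_nonneg (q i : ℝ)
        linarith
    _ = d * jb q := by simp
    _ ≤ _ := by nlinarith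

lemma sum_half_le' (q : Zd d) : ∑ i, |((-(1/2) : ℝ) • rv q) i| ≤ (1 + d) * jb q := by
  convert sum_half_le q using 2 with i
  simp

lemma one_term {μ M : ℝ} {s₀ : ℕ} {A : Sym d} (hA : SB μ (s₀ + 4) M A)
    {p q k : Zd d} {η v : Vec d} (hη : Cmp 8 (jbR η) (jb k)) (hv : ∑ i, |v i| ≤ (1 + d) * jb q)
    (r s : ℕ) (h : s + r = s₀ + 4) :
    jb p ^ s * ‖dn r A v p η‖ ≤ jb q ^ r * ((1 + d) ^ r * Cd d (s₀ + 4) * M * 8 ^ (|μ| + r) * jb k ^ (μ - r)) := by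
  have h1 := dn_bound r s (h ▸ hA) p η v
  refine h1.trans ?_
  have hM := hA.nonneg
  have hq := jb_pos q
  have hk := jb_pos k
  have hc := Cd_pos d s
  have h2 : jbR η ^ (μ - r) ≤ 8 ^ (|μ| + r) * jb k ^ (μ - r) := by
    refine (hη.rpow (by norm_num) (jbR_pos η) hk (μ - r)).trans ?_
    gcongr
    · norm_num
    · refine (abs_sub _ _).trans ?_
      simp
  have h3 : Cd d s ≤ Cd d (s₀ + 4) := Cd_mono (by omega)
  calc (∑ i, |v i|) ^ r * (Cd d s * M * jbR η ^ (μ - r))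
      ≤ ((1 + d) * jb q) ^ r * (Cd d (s₀ + 4) * M * (8 ^ (|μ| + r) * jb k ^ (μ - r))) := by
        have := jbR_pos η
        have := Cd_pos d (s₀ + 4)
        have := mul_nonneg this.le hM
        gcongr
    _ = _ := by rw [mul_pow]; ring

lemma term_bound {μ₁ μ₂ MA MB Λ : ℝ} {s₀ : ℕ} {A B : Sym d} (hA : SB μ₁ (s₀ + 4) MA A)
    (hB : SB μ₂ (s₀ + 4) MB B) (hΛ : 1 ≤ Λ) {p q k : Zd d} {η ζ : Vec d} (hη : Cmp 8 (jbR η) (jb k))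
    (hζ : Cmp 8 (jbR ζ) (jb k)) (r r' n : ℕ) (hr : r + r' + n = 3)
    (hn : n = 0 ∨ jb k ≤ Λ * (jb p * jb q)) :
    ‖dn r A ((1/2 : ℝ) • rv q) p η * dn r' B ((-(1/2) : ℝ) • rv p) q ζ‖ ≤
      TC d s₀ μ₁ μ₂ Λ * MA * MB * jb k ^ (μ₁ + μ₂ - 3) * (Gw s₀ p * Gw s₀ q) := by
  have h1 := one_term hA (p := p) hη (sum_half_le q) r (s₀ + 1 + n + r') (by omega)
  have h2 := one_term hB (p := q) hζ (sum_half_le' p) r' (s₀ + 1 + n + r) (by omega)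
  have hMA := hA.nonneg
  have hMB := hB.nonneg
  have hP := jb_pos p
  have hQ := jb_pos q
  have hK := jb_pos k
  have hc := Cd_pos d (s₀ + 4)
  rw [norm_mul]
  set x := ‖dn r A ((1/2 : ℝ) • rv q) p η‖
  set y := ‖dn r' B ((-(1/2) : ℝ) • rv p) q ζ‖
  have hx : 0 ≤ x := norm_nonneg _
  have hy : 0 ≤ y := norm_nonneg _
  set P := jb p
  set Q := jb q
  set K := jb k
  set c := Cd d (s₀ + 4)
  have h3 := mul_le_mul h1 h2 (by positivity) (by positivity)
  have hKn : K ^ n ≤ Λ ^ 3 * (P * Q) ^ n := by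
    rcases hn with hn | hn
    · subst hn; simp; exact one_le_pow₀ hΛ
    · calc K ^ n ≤ (Λ * (P * Q)) ^ n := by gcongr
        _ = Λ ^ n * (P * Q) ^ n := mul_pow _ _ _
        _ ≤ _ := by gcongr; omega
  have e1 : K ^ (μ₁ - r) * K ^ (μ₂ - r') = K ^ (μ₁ + μ₂ - 3) * K ^ n := by
    rw [← Real.rpow_natCast K n, ← Real.rpow_add hK, ← Real.rpow_add hK]
    congr 1
    have : (r:ℝ) + r' + n = 3 := by exact_mod_cast hr
    linarith
  have e2 : (8:ℝ) ^ (|μ₁| + r) * 8 ^ (|μ₂| + r') ≤ 8 ^ (|μ₁| + |μ₂| + 3) := by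
    rw [← Real.rpow_add (by norm_num)]
    apply Real.rpow_le_rpow_of_exponent_le (by norm_num)
    have : (r:ℝ) + r' + n = 3 := by exact_mod_cast hr
    have : (0:ℝ) ≤ n := Nat.cast_nonneg n
    linarith
  have e3 : ((1:ℝ) + d) ^ r * (1 + d) ^ r' ≤ (1 + d) ^ 3 := by
    rw [← pow_add]
    apply pow_le_pow_right₀
    · have : (0:ℝ) ≤ d := Nat.cast_nonneg d
      linarith
    · omega
  have hpos : 0 < P ^ r' * Q ^ r * (P * Q) ^ n := by positivity
  have h4 : (P ^ r' * Q ^ r * (P * Q) ^ n) * (P ^ (s₀ + 1) * Q ^ (s₀ + 1) * (x * y)) ≤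
      (P ^ r' * Q ^ r * (P * Q) ^ n) * (TC d s₀ μ₁ μ₂ Λ * MA * MB * K ^ (μ₁ + μ₂ - 3)) := by
    calc _ = P ^ (s₀ + 1 + n + r') * x * (Q ^ (s₀ + 1 + n + r) * y) := by
          rw [mul_pow]; ring
      _ ≤ _ := h3
      _ = P ^ r' * Q ^ r * (((1 + d) ^ r * (1 + d) ^ r') * c ^ 2 * MA * MB * ((8:ℝ) ^ (|μ₁| + r) * 8 ^ (|μ₂| + r')) *
            (K ^ (μ₁ - r) * K ^ (μ₂ - r'))) := by ring
      _ ≤ P ^ r' * Q ^ r * ((1 + d) ^ 3 * c ^ 2 * MA * MB * (8 ^ (|μ₁| + |μ₂| + 3)) *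
            (K ^ (μ₁ + μ₂ - 3) * (Λ ^ 3 * (P * Q) ^ n))) := by
          rw [e1]; gcongr
      _ = _ := by unfold TC; ring
  have h5 := le_of_mul_le_mul_left h4 hpos
  have hG : Gw s₀ p * Gw s₀ q = (P ^ (s₀ + 1) * Q ^ (s₀ + 1))⁻¹ := by
    rw [mul_inv]; rfl
  rw [hG, le_mul_inv_iff₀ (by positivity)]
  linarith

/-- second order Taylor polynomial -/
def Q2 (A B : Sym d) (p q : Zd d) (ξ : Vec d) : ℂ :=
  let u := (1/2 : ℝ) • rv q
  let w := (-(1/2) : ℝ) • rv p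
  dn 0 A u p ξ * dn 0 B w q ξ + (dn 1 A u p ξ * dn 0 B w q ξ + dn 0 A u p ξ * dn 1 B w q ξ) +
    (dn 2 A u p ξ * dn 0 B w q ξ + 2 * (dn 1 A u p ξ * dn 1 B w q ξ) + dn 0 A u p ξ * dn 2 B w q ξ) / 2

/-- the kernel of the remainder -/
def kap (χ : ℝ → ℝ) (ε : ℝ) (A B : Sym d) (j l k : Zd d) : ℂ :=
  (cutFactor χ ε j l : ℂ) * (cutFactor χ ε l k : ℂ) *
      (symCoeff A (j - l) (mid j l) * symCoeff B (l - k) (mid l k))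
    - (cutFactor χ ε j k : ℂ) * Q2 A B (j - l) (l - k) (mid j k)

lemma mid_u (j l k : Zd d) : mid j k + (1:ℝ) • ((1/2 : ℝ) • rv (l - k)) = mid j l := by
  funext i; simp [mid, rv]; ring

lemma mid_w (j l k : Zd d) : mid j k + (1:ℝ) • ((-(1/2) : ℝ) • rv (j - l)) = mid l k := by
  funext i; simp [mid, rv]; ring

lemma taylor_bound {μ₁ μ₂ MA MB T : ℝ} {s₀ : ℕ} {A B : Sym d} (hA : SB μ₁ (s₀ + 4) MA A)
    (hB : SB μ₂ (s₀ + 4) MB B) {p q : Zd d} {ξ : Vec d}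
    (hT : ∀ t ∈ Set.Icc (0:ℝ) 1, ∀ r r', r + r' = 3 →
      ‖dn r A ((1/2 : ℝ) • rv q) p (ξ + t • ((1/2 : ℝ) • rv q)) *
        dn r' B ((-(1/2) : ℝ) • rv p) q (ξ + t • ((-(1/2) : ℝ) • rv p))‖ ≤ T) :
    ‖symCoeff A p (ξ + (1:ℝ) • ((1/2 : ℝ) • rv q)) * symCoeff B q (ξ + (1:ℝ) • ((-(1/2) : ℝ) • rv p)) - Q2 A B p q ξ‖
      ≤ 8 * T := by
  have hQ : Q2 A B p q ξ = Q2 A B p q ξ := rfl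
  conv_rhs at hQ => unfold Q2
  set u := (1/2 : ℝ) • rv q
  set w := (-(1/2) : ℝ) • rv p
  have dA : ∀ r ≤ 3, ∀ t : ℝ, HasDerivAt (fun t : ℝ => dn r A u p (ξ + t • u)) (dn (r + 1) A u p (ξ + t • u)) t :=
    fun r hr t => hasDerivAt_dn r (s := s₀ + 3 - r) (by convert hA using 1; omega) p ξ u t
  have dB : ∀ r ≤ 3, ∀ t : ℝ, HasDerivAt (fun t : ℝ => dn r B w q (ξ + t • w)) (dn (r + 1) B w q (ξ + t • w)) t :=
    fun r hr t => hasDerivAt_dn r (s := s₀ + 3 - r) (by convert hB using 1; omega) q ξ w t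
  set f : ℕ → ℝ → ℂ := fun r t => dn r A u p (ξ + t • u) with hf
  set g : ℕ → ℝ → ℂ := fun r t => dn r B w q (ξ + t • w) with hg
  have key := taylor3 (f0 := fun t => f 0 t * g 0 t) (f1 := fun t => f 1 t * g 0 t + f 0 t * g 1 t)
    (f2 := fun t => f 2 t * g 0 t + 2 * (f 1 t * g 1 t) + f 0 t * g 2 t)
    (f3 := fun t => f 3 t * g 0 t + 3 * (f 2 t * g 1 t) + 3 * (f 1 t * g 2 t) + f 0 t * g 3 t)
    (C := 8 * T)
    (fun t => ((dA 0 (by norm_num) t).mul (dB 0 (by norm_num) t)))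
    (fun t => (((dA 1 (by norm_num) t).mul (dB 0 (by norm_num) t)).add
      ((dA 0 (by norm_num) t).mul (dB 1 (by norm_num) t))).congr_deriv (by simp only [hf, hg]; ring))
    (fun t => ((((dA 2 (by norm_num) t).mul (dB 0 (by norm_num) t)).add
      (((dA 1 (by norm_num) t).mul (dB 1 (by norm_num) t)).const_mul 2)).add
      ((dA 0 (by norm_num) t).mul (dB 2 (by norm_num) t))).congr_deriv (by simp only [hf, hg]; ring))
    (fun t ht => by
      have t1 := hT t ht 3 0 rfl
      have t2 := hT t ht 2 1 rfl
      have t3 := hT t ht 1 2 rfl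
      have t4 := hT t ht 0 3 rfl
      refine (norm_add₄_le).trans ?_
      simp only [norm_mul (3:ℂ), Complex.norm_ofNat]
      simp only [hf, hg]
      linarith)
  simp only [hf, hg, zero_smul, add_zero] at key
  rw [hQ]
  exact key

lemma near_of {P Q x y : Vec d} {α β δ : ℝ} (h : rnorm P + rnorm Q ≤ δ) (hα : |α| ≤ 1) (hβ : |β| ≤ 1)
    (hx : x - y = α • P + β • Q) : rnorm (x - y) ≤ δ := by
  rw [hx]
  have h1 := rnorm_add_le (α • P) (β • Q)
  rw [rnorm_smul', rnorm_smul'] at h1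
  have := mul_le_of_le_one_left (rnorm_nonneg P) hα
  have := mul_le_of_le_one_left (rnorm_nonneg Q) hβ
  linarith

lemma kap_bound {χ : ℝ → ℝ} (hχ : IsCutoff χ) {ε : ℝ} (hε₀ : 0 < ε) (hε₁ : ε < 1 / 4)
    {μ₁ μ₂ MA MB : ℝ} {s₀ : ℕ} {A B : Sym d} (hA : SB μ₁ (s₀ + 4) MA A)
    (hB : SB μ₂ (s₀ + 4) MB B) (σ : ℝ) (j l k : Zd d) :
    jb j ^ σ * ‖kap χ ε A B j l k‖ ≤ 16 ^ |σ| * jb k ^ σ *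
      (8 * (TC d s₀ μ₁ μ₂ (4 / ε) * MA * MB * jb k ^ (μ₁ + μ₂ - 3) * (Gw s₀ (j - l) * Gw s₀ (l - k)))) := by
  have hΛ : 1 ≤ 4 / ε := by rw [le_div_iff₀ hε₀]; linarith
  have hTC := TC_nonneg d s₀ μ₁ μ₂ hΛ
  have hMA := hA.nonneg
  have hMB := hB.nonneg
  have hk := jb_pos k
  have hj := jb_pos j
  have hG1 := Gw_pos s₀ (j - l)
  have hG2 := Gw_pos s₀ (l - k)
  have tb := fun (η ζ : Vec d) (h1 : Cmp 8 (jbR η) (jb k)) (h2 : Cmp 8 (jbR ζ) (jb k)) =>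
    term_bound hA hB hΛ (p := j - l) (q := l - k) (k := k) h1 h2
  set T := TC d s₀ μ₁ μ₂ (4 / ε) * MA * MB * jb k ^ (μ₁ + μ₂ - 3) * (Gw s₀ (j - l) * Gw s₀ (l - k)) with hTdef
  have hT0 : 0 ≤ T := by positivity
  have hwj : Cmp 16 (jb j) (jb k) → jb j ^ σ ≤ 16 ^ |σ| * jb k ^ σ := fun h => h.rpow (by norm_num) hj hk σ
  have hD : 0 ≤ (16:ℝ) ^ |σ| * jb k ^ σ := by positivity
  set Dd := (16:ℝ) ^ |σ| * jb k ^ σ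
  by_cases hc : rnorm (rv (j - l)) + rnorm (rv (l - k)) ≤ ε / 2 * jb k
  · have cm : ∀ x : Vec d, ∀ α β : ℝ, |α| ≤ 1 → |β| ≤ 1 → x - rv k = α • rv (j - l) + β • rv (l - k) →
        Cmp 2 (jbR x) (jb k) := by
      intro x α β h1 h2 h3
      refine cmp_near ((near_of hc h1 h2 h3).trans ?_)
      change ε / 2 * jb k ≤ 1 / 2 * jb k
      nlinarith
    have cm8 : ∀ x : Vec d, ∀ α β : ℝ, |α| ≤ 1 → |β| ≤ 1 → x - rv k = α • rv (j - l) + β • rv (l - k) →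
        Cmp 8 (jbR x) (jb k) := fun x α β h1 h2 h3 =>
      (cm x α β h1 h2 h3).mono (jbR_pos x).le hk.le (by norm_num)
    have hh : |(1/2 : ℝ)| ≤ 1 := by rw [abs_of_pos] <;> norm_num
    have h1 : Cmp 2 (jbR (mid j l)) (jb k) := cm _ (1/2) 1 hh (by simp) (by
      funext i; simp [mid, rv]; ring)
    have h2 : Cmp 2 (jbR (mid l k)) (jb k) := cm _ 0 (1/2) (by simp) hh (by
      funext i; simp [mid, rv]; ring)
    have h3 : Cmp 2 (jbR (mid j k)) (jb k) := cm _ (1/2) (1/2) hh hh (by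
      funext i; simp [mid, rv]; ring)
    have h4 : Cmp 16 (jb j) (jb k) := (cm (rv j) 1 1 (by simp) (by simp) (by
      funext i; simp [rv])).mono hj.le hk.le (by norm_num)
    have r1 := rnorm_nonneg (rv (j - l))
    have r2 := rnorm_nonneg (rv (l - k))
    have c1 : cutFactor χ ε j l = 1 := cut_one hχ hε₀ (by nlinarith [h1.2])
    have c2 : cutFactor χ ε l k = 1 := cut_one hχ hε₀ (by nlinarith [h2.2])
    have c3 : cutFactor χ ε j k = 1 := cut_one hχ hε₀ (by
      have : rnorm (rv j - rv k) ≤ ε / 2 * jb k := near_of (α := 1) (β := 1) hc (by simp) (by simp) (by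
        funext i; simp [rv])
      rw [show rv (j - k) = rv j - rv k by funext i; simp [rv]]
      nlinarith [h3.2])
    have key : ‖kap χ ε A B j l k‖ ≤ 8 * T := by
      unfold kap
      rw [c1, c2, c3]
      have := taylor_bound hA hB (p := j - l) (q := l - k) (ξ := mid j k) (T := T) (fun t ht r r' hr => by
        have q1 := cm8 (mid j k + t • ((1/2 : ℝ) • rv (l - k))) (1/2) ((1 + t)/2) hh
          (by rw [abs_of_nonneg] <;> linarith [ht.1, ht.2]) (by funext i; simp [mid, rv]; ring)
        have q2 := cm8 (mid j k + t • ((-(1/2) : ℝ) • rv (j - l))) ((1 - t)/2) (1/2)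
          (by rw [abs_of_nonneg] <;> linarith [ht.1, ht.2]) hh (by funext i; simp [mid, rv]; ring)
        exact tb _ _ q1 q2 r r' 0 (by omega) (Or.inl rfl))
      rw [mid_u, mid_w] at this
      simpa using this
    exact mul_le_mul (hwj h4) key (norm_nonneg _) hD
  · push Not at hc
    have hn : jb k ≤ 4 / ε * (jb (j - l) * jb (l - k)) := by
      have a1 := rnorm_le_jbR (rv (j - l))
      have a2 := rnorm_le_jbR (rv (l - k))
      rw [← jb_eq] at a1 a2
      have b1 := one_le_jb (j - l)
      have b2 := one_le_jb (l - k)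
      have : jb (j - l) + jb (l - k) ≤ 2 * (jb (j - l) * jb (l - k)) := by nlinarith
      rw [div_mul_eq_mul_div, le_div_iff₀ hε₀]
      nlinarith
    have p1 : jb j ^ σ * ‖(cutFactor χ ε j l : ℂ) * (cutFactor χ ε l k : ℂ) *
      (symCoeff A (j - l) (mid j l) * symCoeff B (l - k) (mid l k))‖ ≤ Dd * T := by
      by_cases z1 : cutFactor χ ε j l = 0
      · simp [z1]; positivity
      by_cases z2 : cutFactor χ ε l k = 0
      · simp [z2]; positivity
      obtain ⟨u1, u2⟩ := cut_cmp hχ hε₀ hε₁ z1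
      obtain ⟨v1, v2⟩ := cut_cmp hχ hε₀ hε₁ z2
      have w1 : Cmp 4 (jb l) (jb k) := by
        convert v1.trans (by norm_num) (by norm_num) v2.symm using 1; norm_num
      have w2 : Cmp 8 (jbR (mid j l)) (jb k) := by
        convert u2.symm.trans (by norm_num) (by norm_num) w1 using 1; norm_num
      have w3 : Cmp 16 (jb j) (jb k) := by
        convert u1.trans (by norm_num) (by norm_num) w2 using 1; norm_num
      have w4 : Cmp 8 (jbR (mid l k)) (jb k) := v2.symm.mono (jbR_pos _).le hk.le (by norm_num)
      refine mul_le_mul (hwj w3) ?_ (norm_nonneg _) hD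
      rw [norm_mul, norm_mul]
      have := tb _ _ w2 w4 0 0 3 rfl (Or.inr hn)
      have n1 := norm_cut_le hχ (ε := ε) j l
      have n2 := norm_cut_le hχ (ε := ε) l k
      calc _ ≤ 1 * 1 * ‖symCoeff A (j - l) (mid j l) * symCoeff B (l - k) (mid l k)‖ := by gcongr
        _ ≤ T := by rw [one_mul, one_mul]; exact this
    have p2 : jb j ^ σ * ‖(cutFactor χ ε j k : ℂ) * Q2 A B (j - l) (l - k) (mid j k)‖ ≤ Dd * (5 * T) := by
      by_cases z1 : cutFactor χ ε j k = 0
      · simp [z1]; positivity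
      obtain ⟨u1, u2⟩ := cut_cmp hχ hε₀ hε₁ z1
      have w1 : Cmp 4 (jb j) (jb k) := by
        convert u1.trans (by norm_num) (by norm_num) u2.symm using 1; norm_num
      have w3 : Cmp 16 (jb j) (jb k) := w1.mono hj.le hk.le (by norm_num)
      have w4 : Cmp 8 (jbR (mid j k)) (jb k) := u2.symm.mono (jbR_pos _).le hk.le (by norm_num)
      refine mul_le_mul (hwj w3) ?_ (norm_nonneg _) hD
      rw [norm_mul]
      have n1 := norm_cut_le hχ (ε := ε) j k
      have t00 := tb _ _ w4 w4 0 0 3 rfl (Or.inr hn)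
      have t10 := tb _ _ w4 w4 1 0 2 rfl (Or.inr hn)
      have t01 := tb _ _ w4 w4 0 1 2 rfl (Or.inr hn)
      have t20 := tb _ _ w4 w4 2 0 1 rfl (Or.inr hn)
      have t11 := tb _ _ w4 w4 1 1 1 rfl (Or.inr hn)
      have t02 := tb _ _ w4 w4 0 2 1 rfl (Or.inr hn)
      have hQ : ‖Q2 A B (j - l) (l - k) (mid j k)‖ ≤ 5 * T := by
        unfold Q2
        refine norm_add₃_le.trans ?_
        have e1 := norm_add_le (dn 1 A ((1/2 : ℝ) • rv (l - k)) (j - l) (mid j k) * dn 0 B ((-(1/2) : ℝ) • rv (j - l)) (l - k) (mid j k))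
          (dn 0 A ((1/2 : ℝ) • rv (l - k)) (j - l) (mid j k) * dn 1 B ((-(1/2) : ℝ) • rv (j - l)) (l - k) (mid j k))
        have e2 := norm_add₃_le (a := dn 2 A ((1/2 : ℝ) • rv (l - k)) (j - l) (mid j k) * dn 0 B ((-(1/2) : ℝ) • rv (j - l)) (l - k) (mid j k))
          (b := 2 * (dn 1 A ((1/2 : ℝ) • rv (l - k)) (j - l) (mid j k) * dn 1 B ((-(1/2) : ℝ) • rv (j - l)) (l - k) (mid j k)))
          (c := dn 0 A ((1/2 : ℝ) • rv (l - k)) (j - l) (mid j k) * dn 2 B ((-(1/2) : ℝ) • rv (j - l)) (l - k) (mid j k))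
        rw [norm_mul 2, Complex.norm_ofNat] at e2
        rw [norm_div, Complex.norm_ofNat]
        linarith
      calc _ ≤ 1 * ‖Q2 A B (j - l) (l - k) (mid j k)‖ := by gcongr
        _ ≤ 5 * T := by linarith
    unfold kap
    calc _ ≤ jb j ^ σ * (‖(cutFactor χ ε j l : ℂ) * (cutFactor χ ε l k : ℂ) *
        (symCoeff A (j - l) (mid j l) * symCoeff B (l - k) (mid l k))‖ + ‖(cutFactor χ ε j k : ℂ) * Q2 A B (j - l) (l - k) (mid j k)‖) := by
          gcongr; exact norm_sub_le _ _
      _ ≤ Dd * T + Dd * (5 * T) := by rw [mul_add]; linarith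
      _ ≤ Dd * (8 * T) := by
          have := mul_nonneg hD hT0
          nlinarith

lemma _root_.HasSum.congr_fun' {ι : Type*} {f g : ι → ℂ} {a : ℂ} (h : HasSum f a) (e : ∀ p, g p = f p) :
    HasSum g a := by
  rw [show g = f from funext e]; exact h

/-- product sums -/
def PS (n : Zd d) (F : Zd d → ℂ) (f : Fn d) : Prop :=
  Continuous f ∧ HasSum (fun p => (cst d : ℂ) * F p) (fCoeff f n)

lemma PS.add {n : Zd d} {F G : Zd d → ℂ} {f g : Fn d} (hf : PS n F f) (hg : PS n G g) :
    PS n (fun p => F p + G p) (fun x => f x + g x) := by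
  refine ⟨hf.1.add hg.1, ?_⟩
  rw [fCoeff_add hf.1 hg.1]
  simpa only [mul_add] using hf.2.add hg.2

lemma PS.sub {n : Zd d} {F G : Zd d → ℂ} {f g : Fn d} (hf : PS n F f) (hg : PS n G g) :
    PS n (fun p => F p - G p) (fun x => f x - g x) := by
  refine ⟨hf.1.sub hg.1, ?_⟩
  rw [fCoeff_sub hf.1 hg.1]
  simpa only [mul_sub] using hf.2.sub hg.2

lemma PS.smul {n : Zd d} {F : Zd d → ℂ} {f : Fn d} (hf : PS n F f) (c : ℂ) :
    PS n (fun p => c * F p) (fun x => c * f x) := by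
  refine ⟨continuous_const.mul hf.1, ?_⟩
  rw [fCoeff_smul]
  simpa only [mul_left_comm] using hf.2.mul_left c

lemma PS.sum {n : Zd d} {F : Fin d → Zd d → ℂ} {f : Fin d → Fn d} (hf : ∀ i, PS n (F i) (f i)) :
    PS n (fun p => ∑ i, F i p) (fun x => ∑ i, f i x) := by
  refine ⟨continuous_finsetSum _ fun i _ => (hf i).1, ?_⟩
  rw [fCoeff_sum _ fun i => (hf i).1]
  simpa only [Finset.mul_sum] using hasSum_sum fun i _ => (hf i).2

lemma summable_symCoeff {m M : ℝ} {s : ℕ} {A : Sym d} (hA : SB m s M A) (hs : d < s) (ξ : Vec d) :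
    Summable fun p => symCoeff A p ξ := by
  refine Summable.of_norm_bounded ((summable_jb hs).mul_left (Cd d s * M * jbR ξ ^ m)) fun p => ?_
  have := symCoeff_decay s hA p ξ
  have hp := jb_pos p
  rw [← div_eq_mul_inv, le_div_iff₀ (by positivity)]
  linarith

lemma PS_mul {m M m' M' : ℝ} {s s' : ℕ} {A B : Sym d} (hA : SB m s M A) (hB : SB m' s' M' B) (hs : d < s)
    (n : Zd d) (ξ : Vec d) :
    PS n (fun p => symCoeff A p ξ * symCoeff B (n - p) ξ) (fun x => A x ξ * B x ξ) :=
  ⟨(hA.cont_x ξ).mul (hB.cont_x ξ),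
    fCoeff_mul (hA.cont_x ξ) (hA.2.1 ξ) (hB.cont_x ξ) (summable_symCoeff hA hs ξ) n⟩

lemma dn_one (A : Sym d) (v : Vec d) (p : Zd d) (ξ : Vec d) :
    dn 1 A v p ξ = ∑ i, (v i : ℂ) * symCoeff (pdxi i A) p ξ := rfl

lemma dn_two (A : Sym d) (v : Vec d) (p : Zd d) (ξ : Vec d) :
    dn 2 A v p ξ = ∑ j, ∑ k, (v j : ℂ) * (v k : ℂ) * symCoeff (pdxi j (pdxi k A)) p ξ := by
  change ∑ k, (v k : ℂ) * ∑ j, (v j : ℂ) * symCoeff (pdxi j (pdxi k A)) p ξ = _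
  simp only [Finset.mul_sum]
  rw [Finset.sum_comm]
  refine Finset.sum_congr rfl fun j _ => Finset.sum_congr rfl fun k _ => ?_
  ring

lemma Q2_alg (α β : ℂ) (α1 β1 : Fin d → ℂ) (α2 β2 : Fin d → Fin d → ℂ) (p q : Fin d → ℂ) :
    α * β + ((∑ i, (1/2 * q i) * α1 i) * β + α * ∑ i, (-(1/2) * p i) * β1 i) +
      ((∑ j, ∑ k, (1/2 * q j) * (1/2 * q k) * α2 j k) * β +
        2 * ((∑ i, (1/2 * q i) * α1 i) * ∑ i, (-(1/2) * p i) * β1 i) +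
        α * ∑ j, ∑ k, (-(1/2) * p j) * (-(1/2) * p k) * β2 j k) / 2
    = α * β + 1 / (2 * I) * (∑ j, (α1 j * (I * q j * β) - I * p j * α * β1 j)) -
      1 / 8 * ∑ j, ∑ k, (α2 j k * (I * q j * (I * q k * β)) - 2 * ((I * p j * α1 k) * (I * q k * β1 j))
        + (I * p j * (I * p k * α)) * β2 j k) := by
  have hI : I * I = -1 := Complex.I_mul_I
  have hI0 : I ≠ 0 := Complex.I_ne_zero
  have e1 : 1 / (2 * I) * (∑ j, (α1 j * (I * q j * β) - I * p j * α * β1 j)) =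
      (∑ i, (1/2 * q i) * α1 i) * β + α * ∑ i, (-(1/2) * p i) * β1 i := by
    simp only [Finset.mul_sum, Finset.sum_mul]
    rw [← Finset.sum_add_distrib]
    refine Finset.sum_congr rfl fun j _ => ?_
    field_simp
    ring
  have e2 : (∑ i, (1/2 * q i) * α1 i) * ∑ i, (-(1/2) * p i) * β1 i =
      ∑ j, ∑ k, (1/2 * q k) * α1 k * ((-(1/2) * p j) * β1 j) := by
    rw [Finset.sum_mul_sum, Finset.sum_comm]
  have e3 : ∑ j, ∑ k, (α2 j k * (I * q j * (I * q k * β)) - 2 * ((I * p j * α1 k) * (I * q k * β1 j))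
        + (I * p j * (I * p k * α)) * β2 j k) =
      -4 * ((∑ j, ∑ k, (1/2 * q j) * (1/2 * q k) * α2 j k) * β +
        2 * (∑ j, ∑ k, (1/2 * q k) * α1 k * ((-(1/2) * p j) * β1 j)) +
        α * ∑ j, ∑ k, (-(1/2) * p j) * (-(1/2) * p k) * β2 j k) := by
    simp only [Finset.mul_sum, Finset.sum_mul, ← Finset.sum_add_distrib]
    refine Finset.sum_congr rfl fun j _ => Finset.sum_congr rfl fun k _ => ?_
    linear_combination (α2 j k * q j * q k * β - 2 * p j * α1 k * q k * β1 j + p j * p k * α * β2 j k) * hI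
  rw [e1, e2, e3]
  ring

lemma Q2_hasSum {μ₁ μ₂ MA MB : ℝ} {s₀ : ℕ} (hs₀ : d < s₀) {A B : Sym d} (hA : SB μ₁ (s₀ + 4) MA A)
    (hB : SB μ₂ (s₀ + 4) MB B) (n : Zd d) (ξ : Vec d) :
    HasSum (fun p => (cst d : ℂ) * Q2 A B p (n - p) ξ)
      (symCoeff (fun x ξ => A x ξ * B x ξ) n ξ + 1 / (2 * I) * symCoeff (poisson A B) n ξ
        - 1 / 8 * symCoeff (sigmaB A B) n ξ) := by
  have h0 := PS_mul hA hB (by omega) n ξ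
  have h1 : PS n _ (fun x => poisson A B x ξ) := PS.sum fun j =>
    (PS_mul (hA.pdxi j) (hB.pdx j) (by omega) n ξ).sub (PS_mul (hA.pdx j) (hB.pdxi j) (by omega) n ξ)
  have h2 : PS n _ (fun x => ∑ j, ∑ k, (pdxi j (pdxi k A) x ξ * pdx j (pdx k B) x ξ
      - 2 * (pdx j (pdxi k A) x ξ * pdxi j (pdx k B) x ξ)
      + pdx j (pdx k A) x ξ * pdxi j (pdxi k B) x ξ)) := PS.sum fun j => PS.sum fun k =>
    ((PS_mul ((hA.pdxi k).pdxi j) ((hB.pdx k).pdx j) (by omega) n ξ).sub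
      ((PS_mul ((hA.pdxi k).pdx j) ((hB.pdx k).pdxi j) (by omega) n ξ).smul 2)).add
      (PS_mul ((hA.pdx k).pdx j) ((hB.pdxi k).pdxi j) (by omega) n ξ)
  have h3 : (fun x => sigmaB A B x ξ) = (fun x => ∑ j, ∑ k, (pdxi j (pdxi k A) x ξ * pdx j (pdx k B) x ξ
      - 2 * (pdx j (pdxi k A) x ξ * pdxi j (pdx k B) x ξ)
      + pdx j (pdx k A) x ξ * pdxi j (pdxi k B) x ξ)) := by
    funext x
    simp only [sigmaB, mul_assoc]
  rw [← h3] at h2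
  have := (h0.2.add (h1.2.mul_left (1 / (2 * I)))).sub (h2.2.mul_left (1 / 8))
  refine this.congr_fun' fun p => ?_
  have pA : ∀ j k, symCoeff (pdx j (pdxi k A)) p ξ = I * (p j : ℂ) * symCoeff (pdxi k A) p ξ :=
    fun j k => symCoeff_pdx (hA.pdxi k) j p ξ
  have pA2 : ∀ j k, symCoeff (pdx j (pdx k A)) p ξ = I * (p j : ℂ) * (I * (p k : ℂ) * symCoeff A p ξ) :=
    fun j k => by rw [symCoeff_pdx (hA.pdx k) j p ξ, symCoeff_pdx hA k]
  have pA1 : ∀ j, symCoeff (pdx j A) p ξ = I * (p j : ℂ) * symCoeff A p ξ := fun j => symCoeff_pdx hA j p ξ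
  have pB1 : ∀ j, symCoeff (pdx j B) (n - p) ξ = I * (((n - p) j : ℤ) : ℂ) * symCoeff B (n - p) ξ :=
    fun j => symCoeff_pdx hB j _ ξ
  have pB2 : ∀ j k, symCoeff (pdx j (pdx k B)) (n - p) ξ =
      I * (((n - p) j : ℤ) : ℂ) * (I * (((n - p) k : ℤ) : ℂ) * symCoeff B (n - p) ξ) :=
    fun j k => by rw [symCoeff_pdx (hB.pdx k) j _ ξ, symCoeff_pdx hB k]
  have pB : ∀ j k, symCoeff (pdxi j (pdx k B)) (n - p) ξ =
      I * (((n - p) k : ℤ) : ℂ) * symCoeff (pdxi j B) (n - p) ξ :=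
    fun j k => symCoeff_pdxi_pdx (s := s₀ + 2) hB j k _ ξ
  have key := Q2_alg (symCoeff A p ξ) (symCoeff B (n - p) ξ) (fun i => symCoeff (pdxi i A) p ξ)
    (fun i => symCoeff (pdxi i B) (n - p) ξ) (fun j k => symCoeff (pdxi j (pdxi k A)) p ξ)
    (fun j k => symCoeff (pdxi j (pdxi k B)) (n - p) ξ) (fun i => (p i : ℂ)) (fun i => (((n - p) i : ℤ) : ℂ))
  have hQ : Q2 A B p (n - p) ξ = _ := Eq.trans (by
    unfold Q2
    simp only [dn_one, dn_two]
    simp only [dn, Pi.smul_apply, smul_eq_mul, rv]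
    push_cast
    rfl) key
  rw [hQ]
  simp only [pA, pA2, pA1, pB1, pB2, pB]
  ring

/-- the remainder -/
def Er (χ : ℝ → ℝ) (ε : ℝ) (A B : Sym d) (c : Seq d) : Seq d := fun j =>
  paraC χ ε A (paraC χ ε B c) j - paraC χ ε (fun x ξ => A x ξ * B x ξ) c j
    - 1 / (2 * Complex.I) * paraC χ ε (poisson A B) c j + 1 / 8 * paraC χ ε (sigmaB A B) c j

lemma paraC_eq_sum {χ : ℝ → ℝ} {ε : ℝ} (a : Sym d) (c : Seq d) (j : Zd d) {S : Finset (Zd d)}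
    (hS : ∀ k, cutFactor χ ε j k ≠ 0 → k ∈ S) :
    paraC χ ε a c j = (cst d : ℂ) * ∑ k ∈ S, (cutFactor χ ε j k : ℂ) * symCoeff a (j - k) (mid j k) * c k := by
  unfold paraC
  rw [tsum_eq_sum (s := S)]
  · rfl
  · intro k hk
    have : cutFactor χ ε j k = 0 := by
      by_contra h
      exact hk (hS k h)
    simp [this]

lemma cut_le {χ : ℝ → ℝ} (hχ : IsCutoff χ) {ε : ℝ} (hε₀ : 0 < ε) (hε₁ : ε < 1 / 4) {j k : Zd d}
    (h : cutFactor χ ε j k ≠ 0) : jb k ≤ 4 * jb j := by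
  obtain ⟨h1, h2⟩ := cut_cmp hχ hε₀ hε₁ h
  linarith [h2.1, h1.2]

lemma Er_eq {χ : ℝ → ℝ} (hχ : IsCutoff χ) {ε : ℝ} (hε₀ : 0 < ε) (hε₁ : ε < 1 / 4)
    {μ₁ μ₂ MA MB : ℝ} {s₀ : ℕ} (hs₀ : d < s₀) {A B : Sym d} (hA : SB μ₁ (s₀ + 4) MA A)
    (hB : SB μ₂ (s₀ + 4) MB B) (c : Seq d) (j : Zd d) :
    ∃ (S : Finset (Zd d)) (W : Zd d → ℂ), (∀ k, HasSum (fun l => (cst d : ℂ) * kap χ ε A B j l k) (W k)) ∧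
      Er χ ε A B c j = (cst d : ℂ) * ∑ k ∈ S, W k * c k := by
  classical
  set S := (finite_jb (d := d) (16 * jb j)).toFinset with hSdef
  have hj := jb_pos j
  have hmem : ∀ n : Zd d, n ∈ S ↔ jb n ≤ 16 * jb j := fun n => by simp [hSdef]
  have hS1 : ∀ k, cutFactor χ ε j k ≠ 0 → k ∈ S := fun k h => by
    rw [hmem]; linarith [cut_le hχ hε₀ hε₁ h]
  have hS2 : ∀ l, cutFactor χ ε j l ≠ 0 → ∀ k, cutFactor χ ε l k ≠ 0 → k ∈ S := fun l h k h' => by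
    rw [hmem]; linarith [cut_le hχ hε₀ hε₁ h, cut_le hχ hε₀ hε₁ h']
  set f : Zd d → Zd d → ℂ := fun k l => (cutFactor χ ε j l : ℂ) * (cutFactor χ ε l k : ℂ) *
      (symCoeff A (j - l) (mid j l) * symCoeff B (l - k) (mid l k)) with hf
  set Sy : Zd d → ℂ := fun k => symCoeff (fun x ξ => A x ξ * B x ξ) (j - k) (mid j k)
    + 1 / (2 * I) * symCoeff (poisson A B) (j - k) (mid j k)
        - 1 / 8 * symCoeff (sigmaB A B) (j - k) (mid j k) with hSy
  refine ⟨S, fun k => (cst d : ℂ) * ∑ l ∈ S, f k l - (cutFactor χ ε j k : ℂ) * Sy k, fun k => ?_, ?_⟩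
  · have h1 : HasSum (f k) (∑ l ∈ S, f k l) := hasSum_sum_of_ne_finset_zero fun l hl => by
      have : cutFactor χ ε j l = 0 := by
        by_contra h
        exact hl (hS1 l h)
      simp [hf, this]
    have h2 := Q2_hasSum hs₀ hA hB (j - k) (mid j k)
    have h3 := (Equiv.hasSum_iff (Equiv.subLeft j)).mpr h2
    refine ((h1.mul_left (cst d : ℂ)).sub (h3.mul_left (cutFactor χ ε j k : ℂ))).congr_fun' fun l => ?_
    simp only [Function.comp, Equiv.subLeft_apply, kap, hf]
    rw [show j - k - (j - l) = l - k by abel]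
    ring
  · have e1 : paraC χ ε A (paraC χ ε B c) j = (cst d : ℂ) * ∑ k ∈ S, ((cst d : ℂ) * ∑ l ∈ S, f k l) * c k := by
      rw [paraC_eq_sum _ _ _ hS1]
      congr 1
      have : ∀ l ∈ S, (cutFactor χ ε j l : ℂ) * symCoeff A (j - l) (mid j l) * paraC χ ε B c l =
          ∑ k ∈ S, (cst d : ℂ) * f k l * c k := by
        intro l _
        by_cases h : cutFactor χ ε j l = 0
        · simp [hf, h]
        · rw [paraC_eq_sum _ _ _ (hS2 l h), ← mul_assoc, Finset.mul_sum]
          refine Finset.sum_congr rfl fun k _ => ?_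
          simp only [hf]; ring
      rw [Finset.sum_congr rfl this, Finset.sum_comm]
      refine Finset.sum_congr rfl fun k _ => ?_
      rw [Finset.mul_sum, Finset.sum_mul]
    unfold Er
    rw [e1, paraC_eq_sum _ _ _ hS1, paraC_eq_sum _ _ _ hS1, paraC_eq_sum _ _ _ hS1]
    simp only [sub_mul, Finset.sum_sub_distrib]
    have e2 : ∑ k ∈ S, (cutFactor χ ε j k : ℂ) * Sy k * c k =
        ∑ k ∈ S, (cutFactor χ ε j k : ℂ) * symCoeff (fun x ξ => A x ξ * B x ξ) (j - k) (mid j k) * c k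
        + 1 / (2 * I) * ∑ k ∈ S, (cutFactor χ ε j k : ℂ) * symCoeff (poisson A B) (j - k) (mid j k) * c k
        - 1 / 8 * ∑ k ∈ S, (cutFactor χ ε j k : ℂ) * symCoeff (sigmaB A B) (j - k) (mid j k) * c k := by
      rw [Finset.mul_sum, Finset.mul_sum, ← Finset.sum_add_distrib, ← Finset.sum_sub_distrib]
      refine Finset.sum_congr rfl fun k _ => ?_
      simp only [hSy]; ring
    rw [e2]
    ring

/-- convolution weight -/
def Hw (s₀ : ℕ) (n : Zd d) : ℝ := ∑' p, Gw s₀ p * Gw s₀ (n - p)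

lemma Gw_prod (s₀ : ℕ) (hs₀ : d < s₀) :
    Summable fun x : Zd d × Zd d => Gw s₀ x.2 * Gw s₀ (x.1 - x.2) := by
  have h : Summable (Gw (d := d) s₀) := summable_jb (by omega)
  have h2 := h.mul_of_nonneg h (fun p => (Gw_pos s₀ p).le) (fun p => (Gw_pos s₀ p).le)
  refine h2.comp_injective (i := fun x : Zd d × Zd d => (x.2, x.1 - x.2)) ?_
  rintro ⟨a, b⟩ ⟨a', b'⟩ h
  simp only [Prod.mk.injEq] at h ⊢
  obtain ⟨rfl, h⟩ := h
  exact ⟨sub_left_injective h, rfl⟩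

lemma Hw_summable (s₀ : ℕ) (hs₀ : d < s₀) : Summable (Hw (d := d) s₀) := (Gw_prod s₀ hs₀).prod

lemma Hw_nonneg (s₀ : ℕ) (n : Zd d) : 0 ≤ Hw s₀ n :=
  tsum_nonneg fun p => mul_nonneg (Gw_pos s₀ p).le (Gw_pos s₀ _).le

lemma Hw_hasSum (s₀ : ℕ) (hs₀ : d < s₀) (j k : Zd d) :
    HasSum (fun l => Gw s₀ (j - l) * Gw s₀ (l - k)) (Hw s₀ (j - k)) := by
  have h1 : HasSum (fun p => Gw s₀ p * Gw s₀ (j - k - p)) (Hw s₀ (j - k)) :=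
    ((Gw_prod s₀ hs₀).prod_factor (j - k)).hasSum
  have h2 := (Equiv.hasSum_iff (Equiv.subLeft j)).mpr h1
  refine (show (fun l => Gw s₀ (j - l) * Gw s₀ (l - k)) = _ from ?_) ▸ h2
  funext l
  simp only [Function.comp, Equiv.subLeft_apply]
  rw [show j - k - (j - l) = l - k by abel]

lemma Er_bound {χ : ℝ → ℝ} (hχ : IsCutoff χ) {ε : ℝ} (hε₀ : 0 < ε) (hε₁ : ε < 1 / 4)
    {μ₁ μ₂ : ℝ} {s₀ : ℕ} (hs₀ : d < s₀) (s : ℝ) :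
    ∃ C > 0, ∀ {MA MB : ℝ} {A B : Sym d}, SB μ₁ (s₀ + 4) MA A → SB μ₂ (s₀ + 4) MB B →
      ∀ c : Seq d, InHsSeq s c →
      hsNorm (s - μ₁ - μ₂ + 3) (Er χ ε A B c) ≤ C * MA * MB * hsNorm s c := by
  set σ := s - μ₁ - μ₂ + 3 with hσ
  have hΛ : 1 ≤ 4 / ε := by rw [le_div_iff₀ hε₀]; linarith
  have hTC := TC_nonneg d s₀ μ₁ μ₂ hΛ
  set K := cst d ^ 2 * (16 ^ |σ| * (8 * TC d s₀ μ₁ μ₂ (4 / ε))) with hK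
  have hc0 := cst_pos d
  have hK0 : 0 ≤ K := by positivity
  have hH0 : 0 ≤ ∑' n : Zd d, Hw s₀ n := tsum_nonneg (Hw_nonneg s₀)
  refine ⟨K * (∑' n : Zd d, Hw s₀ n) + 1, by positivity, ?_⟩
  intro MA MB A B hA hB c hc
  have hMA := hA.nonneg
  have hMB := hB.nonneg
  have sq : ∀ (t : ℝ) (b : Seq d) n, (jb n ^ t * ‖b n‖) ^ 2 = jb n ^ (2 * t) * ‖b n‖ ^ 2 := by
    intro t b n
    rw [mul_pow, mul_comm 2 t, Real.rpow_mul (jb_pos n).le]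
    norm_num
  have hy := young (H := fun n => K * MA * MB * Hw s₀ n) (f := fun n => jb n ^ s * ‖c n‖)
    (e := fun n => jb n ^ σ * ‖Er χ ε A B c n‖)
    (fun n => by have := Hw_nonneg s₀ n; positivity)
    ((Hw_summable s₀ hs₀).mul_left _)
    (by simp only [sq]; exact hc)
    (fun n => by have := jb_pos n; positivity)
    (fun j => by
      obtain ⟨S, W, hW, hE⟩ := Er_eq hχ hε₀ hε₁ hs₀ hA hB c j
      refine ⟨S, ?_⟩
      have hWb : ∀ k, jb j ^ σ * ‖W k‖ ≤ cst d * (16 ^ |σ| * jb k ^ σ *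
          (8 * (TC d s₀ μ₁ μ₂ (4 / ε) * MA * MB * jb k ^ (μ₁ + μ₂ - 3) * Hw s₀ (j - k)))) := by
        intro k
        have hb : HasSum (fun l => cst d * (16 ^ |σ| * jb k ^ σ *
          (8 * (TC d s₀ μ₁ μ₂ (4 / ε) * MA * MB * jb k ^ (μ₁ + μ₂ - 3) * (Gw s₀ (j - l) * Gw s₀ (l - k))))))
          (cst d * (16 ^ |σ| * jb k ^ σ *
          (8 * (TC d s₀ μ₁ μ₂ (4 / ε) * MA * MB * jb k ^ (μ₁ + μ₂ - 3) * Hw s₀ (j - k))))) :=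
          ((((Hw_hasSum s₀ hs₀ j k).mul_left _).mul_left _).mul_left _).mul_left _
        have h1 := (hW k).mul_left ((jb j ^ σ : ℝ) : ℂ)
        have h2 := tsum_of_norm_bounded hb (f := fun l => ((jb j ^ σ : ℝ) : ℂ) * ((cst d : ℂ) * kap χ ε A B j l k))
          (fun l => by
            have := kap_bound hχ hε₀ hε₁ hA hB σ j l k
            rw [norm_mul, norm_mul, Complex.norm_real, Complex.norm_real, Real.norm_of_nonneg hc0.le,
              Real.norm_of_nonneg (Real.rpow_nonneg (jb_pos j).le _), mul_left_comm]
            gcongr)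
        rw [h1.tsum_eq, norm_mul, Complex.norm_real, Real.norm_of_nonneg (Real.rpow_nonneg (jb_pos j).le _)] at h2
        exact h2
      rw [hE, norm_mul, Complex.norm_real, Real.norm_of_nonneg hc0.le]
      have hjσ : 0 ≤ jb j ^ σ := Real.rpow_nonneg (jb_pos j).le _
      calc jb j ^ σ * (cst d * ‖∑ k ∈ S, W k * c k‖) ≤ jb j ^ σ * (cst d * ∑ k ∈ S, ‖W k * c k‖) := by
            gcongr; exact norm_sum_le _ _
        _ = ∑ k ∈ S, cst d * ((jb j ^ σ * ‖W k‖) * ‖c k‖) := by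
            rw [Finset.mul_sum, Finset.mul_sum]
            refine Finset.sum_congr rfl fun k _ => ?_
            rw [norm_mul]; ring
        _ ≤ _ := by
            refine Finset.sum_le_sum fun k _ => ?_
            have hk := jb_pos k
            have e : jb k ^ s = jb k ^ σ * jb k ^ (μ₁ + μ₂ - 3) := by
              rw [← Real.rpow_add hk]; congr 1; rw [hσ]; ring
            rw [e]
            calc _ ≤ cst d * ((cst d * (16 ^ |σ| * jb k ^ σ *
          (8 * (TC d s₀ μ₁ μ₂ (4 / ε) * MA * MB * jb k ^ (μ₁ + μ₂ - 3) * Hw s₀ (j - k))))) * ‖c k‖) := by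
                  exact mul_le_mul_of_nonneg_left (mul_le_mul_of_nonneg_right (hWb k) (norm_nonneg _)) hc0.le
              _ = _ := by rw [hK]; ring)
  simp only [sq] at hy
  rw [tsum_mul_left] at hy
  unfold hsNorm hsNormSq
  have hf0 : 0 ≤ ∑' n : Zd d, jb n ^ (2 * s) * ‖c n‖ ^ 2 := tsum_nonneg fun n => by
    have := jb_pos n; positivity
  calc _ ≤ _ := Real.sqrt_le_sqrt hy
    _ = K * MA * MB * (∑' n : Zd d, Hw s₀ n) * √(∑' n : Zd d, jb n ^ (2 * s) * ‖c n‖ ^ 2) := by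
        rw [Real.sqrt_mul (sq_nonneg _), Real.sqrt_sq (by positivity)]
    _ ≤ _ := by
        refine mul_le_mul_of_nonneg_right ?_ (Real.sqrt_nonneg _)
        have := mul_nonneg hMA hMB
        nlinarith

/-- local equality of symbols near half-lattice points -/
def LEq (A A' : Sym d) : Prop := ∀ j k : Zd d, ∀ᶠ ξ in nhds (mid j k), ∀ x, A x ξ = A' x ξ

lemma LEq.pdx {A A' : Sym d} (h : LEq A A') (i : Fin d) : LEq (pdx i A) (pdx i A') := by
  intro j k
  filter_upwards [h j k] with ξ hξ x
  unfold QLNLS.pdx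
  rw [show (fun y => A y ξ) = fun y => A' y ξ from funext hξ]

lemma LEq.pdxi {A A' : Sym d} (h : LEq A A') (i : Fin d) : LEq (pdxi i A) (pdxi i A') := by
  intro j k
  filter_upwards [eventually_eventually_nhds.mpr (h j k)] with ξ hξ x
  unfold QLNLS.pdxi
  have : (fun η => A x η) =ᶠ[nhds ξ] fun η => A' x η := hξ.mono fun η hη => hη x
  rw [this.fderiv_eq]

lemma LEq.mul {A A' B B' : Sym d} (h : LEq A A') (h' : LEq B B') :
    LEq (fun x ξ => A x ξ * B x ξ) (fun x ξ => A' x ξ * B' x ξ) := by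
  intro j k
  filter_upwards [h j k, h' j k] with ξ h1 h2 x
  rw [h1, h2]

lemma LEq.poisson {A A' B B' : Sym d} (h : LEq A A') (h' : LEq B B') :
    LEq (poisson A B) (poisson A' B') := by
  intro j k
  have := eventually_all.mpr fun i => (h.pdx i) j k
  have := eventually_all.mpr fun i => (h.pdxi i) j k
  have := eventually_all.mpr fun i => (h'.pdx i) j k
  have := eventually_all.mpr fun i => (h'.pdxi i) j k
  filter_upwards [eventually_all.mpr fun i => (h.pdx i) j k, eventually_all.mpr fun i => (h.pdxi i) j k,
    eventually_all.mpr fun i => (h'.pdx i) j k, eventually_all.mpr fun i => (h'.pdxi i) j k] with ξ h1 h2 h3 h4 x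
  simp only [QLNLS.poisson, h1, h2, h3, h4]

lemma LEq.sigmaB {A A' B B' : Sym d} (h : LEq A A') (h' : LEq B B') :
    LEq (sigmaB A B) (sigmaB A' B') := by
  intro j k
  filter_upwards [eventually_all.mpr fun i => eventually_all.mpr fun i' => ((h.pdx i).pdx i') j k,
    eventually_all.mpr fun i => eventually_all.mpr fun i' => ((h.pdxi i).pdxi i') j k,
    eventually_all.mpr fun i => eventually_all.mpr fun i' => ((h.pdxi i).pdx i') j k,
    eventually_all.mpr fun i => eventually_all.mpr fun i' => ((h'.pdx i).pdx i') j k,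
    eventually_all.mpr fun i => eventually_all.mpr fun i' => ((h'.pdxi i).pdxi i') j k,
    eventually_all.mpr fun i => eventually_all.mpr fun i' => ((h'.pdx i).pdxi i') j k] with ξ h1 h2 h3 h4 h5 h6 x
  simp only [QLNLS.sigmaB, h1, h2, h3, h4, h5, h6]

lemma LEq.paraC {A A' : Sym d} (h : LEq A A') (χ : ℝ → ℝ) (ε : ℝ) (c : Seq d) :
    paraC χ ε A c = paraC χ ε A' c := by
  funext j
  unfold QLNLS.paraC
  congr 1
  refine tsum_congr fun k => ?_
  have := (h j k).self_of_nhds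
  unfold symCoeff
  rw [show (fun x => A x (mid j k)) = fun x => A' x (mid j k) from funext this]

lemma LEq.Er {A A' B B' : Sym d} (h : LEq A A') (h' : LEq B B') (χ : ℝ → ℝ) (ε : ℝ) (c : Seq d) :
    Er χ ε A B c = Er χ ε A' B' c := by
  unfold QLNLS.Er
  rw [h'.paraC, h.paraC, (h.mul h').paraC, (h.poisson h').paraC, (h.sigmaB h').paraC]

lemma LEq_cut {χ : ℝ → ℝ} (hχ : IsCutoff χ) {R : ℝ} (hR : 0 < R) (hR' : R < 1 / 4) (a : Sym d) :
    LEq (fun x ξ => ((cutXR χ R ξ : ℝ) : ℂ) * a x ξ) (fun x ξ => ((cutXR χ (1/4) ξ : ℝ) : ℂ) * a x ξ) := by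
  intro j k
  have hc := (cont_rnorm (d := d)).continuousAt (x := mid j k)
  suffices h : ∀ᶠ ξ in nhds (mid j k), cutXR χ R ξ = cutXR χ (1/4) ξ by
    filter_upwards [h] with ξ hξ x
    rw [hξ]
  by_cases h0 : mid j k = 0
  · have : rnorm (mid j k) < 5 / 4 * R := by
      rw [h0]; simp [rnorm]; exact hR
    filter_upwards [hc.eventually (gt_mem_nhds this)] with ξ hξ
    have hn := rnorm_nonneg ξ
    unfold cutXR
    rw [hχ.eq_one, hχ.eq_one]
    · rw [abs_of_nonneg (by positivity), div_le_iff₀ (by norm_num)]; linarith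
    · rw [abs_of_nonneg (by positivity), div_le_iff₀ hR]; linarith
  · obtain ⟨i, hi⟩ := Function.ne_iff.mp h0
    have hi' : j i + k i ≠ 0 := by
      intro h
      apply hi
      simp [mid, h]
    have h1 : (1:ℝ) ≤ |((j i + k i : ℤ) : ℝ)| := by
      exact_mod_cast Int.one_le_abs hi'
    have h2 := abs_le_rnorm (mid j k) i
    have h3 : |mid j k i| = |((j i + k i : ℤ) : ℝ)| / 2 := by
      simp only [mid]; rw [abs_div]; norm_num
    have : 2 / 5 < rnorm (mid j k) := by linarith
    filter_upwards [hc.eventually (lt_mem_nhds this)] with ξ hξ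
    have hn := rnorm_nonneg ξ
    unfold cutXR
    rw [hχ.eq_zero, hχ.eq_zero]
    · rw [abs_of_nonneg (by positivity), le_div_iff₀ (by norm_num)]; linarith
    · rw [abs_of_nonneg (by positivity), le_div_iff₀ hR]; linarith

lemma main_large {χ : ℝ → ℝ} (hχ : IsCutoff χ) {ε : ℝ} (hε₀ : 0 < ε) (hε₁ : ε < 1 / 4)
    {m₁ m₂ : ℝ} {s₀ : ℕ} (hs₀ : d < s₀) (s : ℝ) :
    ∃ C > 0, ∀ R : ℝ, 1 / 4 ≤ R → ∀ a b : Sym d, ∀ c : Seq d,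
      InSymClass m₁ (s₀ + 4) a → InSymClass m₂ (s₀ + 4) b → InHsSeq s c →
      hsNorm (s - m₁ - m₂ + 2) (Er χ ε (fun x ξ => ((cutXR χ R ξ : ℝ) : ℂ) * a x ξ)
        (fun x ξ => ((cutXR χ R ξ : ℝ) : ℂ) * b x ξ) c)
      ≤ C * R⁻¹ * symNorm m₁ (s₀ + 4) a * symNorm m₂ (s₀ + 4) b * hsNorm s c := by
  obtain ⟨K, hK, hcut⟩ := SB_cut (d := d) hχ (s₀ + 4)
  obtain ⟨C, hC, hE⟩ := Er_bound (d := d) hχ hε₀ hε₁ (μ₁ := 1 + m₁) (μ₂ := 0 + m₂) hs₀ s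
  refine ⟨C * (2 ^ (s₀ + 4) * K) * (2 ^ (s₀ + 4) * K), by positivity, ?_⟩
  intro R hR a b c ha hb hc
  obtain ⟨h0, h1⟩ := hcut R hR
  have := hE (h1.mul (SB_of_class ha)) (h0.mul (SB_of_class hb)) c hc
  rw [show s - (1 + m₁) - (0 + m₂) + 3 = s - m₁ - m₂ + 2 by ring] at this
  refine this.trans (le_of_eq ?_)
  ring

/-- Proposition 2.5(ii): composition of paradifferential operators with
high-frequency truncated symbols `a_R = 𝒳_R a`, `b_R = 𝒳_R b`, with `m₁+m₂-2 ≤ 0`: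
`T_{a_R} ∘ T_{b_R} = T_{a_R b_R} + (1/2i) T_{{a_R,b_R}} - (1/8) T_{σ(a_R,b_R)} + R(a_R,b_R)`
with `‖R(a_R,b_R)h‖_{H^{s-m₁-m₂+2}} ≤ C R^{-1} |a|_{𝒩^{m₁}_{s₀+4}}|b|_{𝒩^{m₂}_{s₀+4}}‖h‖_{H^s}`. -/
theorem statement_7 (d : ℕ) (hd : 1 ≤ d) (s₀ : ℕ) (hs₀ : d < s₀) (m₁ m₂ : ℝ)
    (hm : m₁ + m₂ - 2 ≤ 0)
    (χ : ℝ → ℝ) (hχ : IsCutoff χ) (ε : ℝ) (hε₀ : 0 < ε) (hε₁ : ε < 1 / 4) (s : ℝ) :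
    ∃ C > (0 : ℝ), ∀ (R : ℝ), 0 < R → ∀ (a b : Sym d) (c : Seq d),
      InSymClass m₁ (s₀ + 4) a → InSymClass m₂ (s₀ + 4) b → InHsSeq s c →
      hsNorm (s - m₁ - m₂ + 2)
          (fun j => paraC χ ε (fun x ξ => ((cutXR χ R ξ : ℝ) : ℂ) * a x ξ)
              (paraC χ ε (fun x ξ => ((cutXR χ R ξ : ℝ) : ℂ) * b x ξ) c) j
            - paraC χ ε (fun x ξ => (((cutXR χ R ξ : ℝ) : ℂ) * a x ξ) *
                (((cutXR χ R ξ : ℝ) : ℂ) * b x ξ)) c j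
            - 1 / (2 * Complex.I) * paraC χ ε
                (poisson (fun x ξ => ((cutXR χ R ξ : ℝ) : ℂ) * a x ξ)
                  (fun x ξ => ((cutXR χ R ξ : ℝ) : ℂ) * b x ξ)) c j
            + 1 / 8 * paraC χ ε
                (sigmaB (fun x ξ => ((cutXR χ R ξ : ℝ) : ℂ) * a x ξ)
                  (fun x ξ => ((cutXR χ R ξ : ℝ) : ℂ) * b x ξ)) c j)
        ≤ C * R⁻¹ * symNorm m₁ (s₀ + 4) a * symNorm m₂ (s₀ + 4) b * hsNorm s c := by
  obtain ⟨C, hC, h⟩ := main_large (d := d) hχ hε₀ hε₁ (m₁ := m₁) (m₂ := m₂) hs₀ s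
  refine ⟨C, hC, ?_⟩
  intro R hR a b c ha hb hc
  change hsNorm _ (Er χ ε (fun x ξ => ((cutXR χ R ξ : ℝ) : ℂ) * a x ξ)
    (fun x ξ => ((cutXR χ R ξ : ℝ) : ℂ) * b x ξ) c) ≤ _
  rcases le_or_gt (1 / 4) R with h4 | h4
  · exact h R h4 a b c ha hb hc
  · rw [(LEq_cut hχ hR h4 a).Er (LEq_cut hχ hR h4 b)]
    refine (h (1 / 4) le_rfl a b c ha hb hc).trans ?_
    have h1 := (SB_of_class ha).nonneg
    have h2 := (SB_of_class hb).nonneg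
    have h3 : 0 ≤ hsNorm s c := Real.sqrt_nonneg _
    have h5 : (1 / 4 : ℝ)⁻¹ ≤ R⁻¹ := inv_anti₀ hR h4.le
    gcongr

end QLNLS
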